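/- arXiv:0709.0092 — 8 statements merged into one kernel-verified Lean document; each statement's English description precedes it below -/
import Mathlib

section
/- Let X be a connected Hausdorff topological space and let 𝔘 be a finite cover of X by open connected subsets such that the set ∂𝔘 := ⋃_{U ∈ 𝔘} ∂U (the union of the topological boundaries of the members of 𝔘) is finite and nonempty. Then there exists a subfamily 𝔙 ⊆ 𝔘 which still covers X and whose cardinality is at most the cardinality of ∂𝔘. -/
/-!
Choose for each point `b` of the finite set `B = ⋃ U ∈ 𝔘, frontier U` a member of `𝔘`
containing `b`. The union `W` of the chosen members is open, nonempty (as `B` is), and contains `B`.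
It is also closed: a point in the closure of `W` lies in the closure of one of the finitely many
chosen sets, hence either in that set or in its frontier, which is contained in `B ⊆ W`.
By connectedness `W` is the whole space.
-/

/-- Let `X` be a connected Hausdorff topological space and `𝔘` a finite
cover of `X` by open connected subsets such that the union of the topological boundaries
of the members of `𝔘` is finite and nonempty.  Then some subfamily `𝔙 ⊆ 𝔘` still covers
`X` and has cardinality at most that of `⋃ U ∈ 𝔘, frontier U`. -/
theorem stmt_0 {X : Type*} [TopologicalSpace X] [T2Space X] [ConnectedSpace X]
    (𝔘 : Finset (Set X))
    (hopen : ∀ U ∈ 𝔘, IsOpen U)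
    (hconn : ∀ U ∈ 𝔘, IsConnected U)
    (hcover : ∀ x : X, ∃ U ∈ 𝔘, x ∈ U)
    (hfin : (⋃ U ∈ 𝔘, frontier U).Finite)
    (hne : (⋃ U ∈ 𝔘, frontier U).Nonempty) :
    ∃ 𝔙 ⊆ 𝔘, (∀ x : X, ∃ U ∈ 𝔙, x ∈ U) ∧
      𝔙.card ≤ (⋃ U ∈ 𝔘, frontier U).ncard := by
  classical
  choose f hf hxf using hcover
  have hsub : hfin.toFinset.image f ⊆ 𝔘 := by
    intro U hU
    obtain ⟨b, -, rfl⟩ := Finset.mem_image.1 hU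
    exact hf b
  refine ⟨hfin.toFinset.image f, hsub, ?_, ?_⟩
  · set W : Set X := ⋃ U ∈ hfin.toFinset.image f, U with hW
    have hBW : (⋃ U ∈ 𝔘, frontier U) ⊆ W := fun b hb =>
      Set.mem_biUnion (Finset.mem_image_of_mem f (hfin.mem_toFinset.2 hb)) (hxf b)
    have hWopen : IsOpen W := isOpen_biUnion fun U hU => hopen U (hsub hU)
    have hWclosed : IsClosed W := by
      refine isClosed_of_closure_subset fun x hx => ?_
      rw [hW, Finset.closure_biUnion] at hx
      obtain ⟨U, hU, hxU⟩ := Set.mem_iUnion₂.1 hx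
      by_cases hxU' : x ∈ U
      · exact Set.mem_biUnion hU hxU'
      · refine hBW (Set.mem_biUnion (hsub hU) ?_)
        rw [(hopen U (hsub hU)).frontier_eq]
        exact ⟨hxU, hxU'⟩
    have hWuniv : W = Set.univ := IsClopen.eq_univ ⟨hWclosed, hWopen⟩ (hne.mono hBW)
    intro x
    have hx : x ∈ W := hWuniv ▸ Set.mem_univ x
    obtain ⟨U, hU, hxU⟩ := Set.mem_iUnion₂.1 hx
    exact ⟨U, hU, hxU⟩
  · rw [Set.ncard_eq_toFinset_card _ hfin]
    exact Finset.card_image_le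
end

section
/- Let K be a field equipped with a nontrivial nonarchimedean absolute value |·|, with respect to which K is complete and algebraically closed, and assume that |n·1_K| = 1 for every positive integer n (i.e. the residue characteristic of K is zero). Let R ∈ K(z) be a rational function of degree at least 2. Then there is no strictly increasing sequence (n_j) of positive integers such that, for every j, the iterate R^{n_j} has no poles in the closed unit ball 𝒪_K = {z ∈ K : |z| ≤ 1} and sup_{z ∈ 𝒪_K} |R^{n_j}(z) − z| tends to 0 as j → ∞. In other words, no subsequence of the sequence of iterates of R converges uniformly to the identity on 𝒪_K. -/
/-!
Suppose `f = R^a` has no poles in the unit ball and `|f(z) - z| ≤ ε < 1` there. Put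
`g(z) = f(z) - z`. Over an algebraically closed field of residue characteristic zero, a rational
function without poles in the unit ball and bounded there by `ε` is `ε`-Lipschitz
(`RigidOn.of_polynomial`, `rational_sub_lipschitz`); hence `|g(f(z)) - g(z)| ≤ ε |g(z)|`, and
summing along the orbit of `z`, `f^k(z) - z = g(z) (k + O(ε))`. As `|k| = 1`, this gives
`|f^k(z) - z| = |f(z) - z|` for every `k ≥ 1` (`iterate_dist`).

If both `R^a` and `R^b` are of this kind, then `(R^a)^b = R^{ab} = (R^b)^a` yields
`|R^a(z) - z| = |R^b(z) - z|` on the unit ball. Letting `b` run along a sequence of iterates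
converging to the identity forces `R^a = id` on the ball, so `R^a = X` in `K(X)`. Then
substitution of `R` is a surjective endomorphism of `K(X)`, so `K(R) = K(X)`, which contradicts
`[K(X) : K(R)] = deg R ≥ 2`.
-/

open Polynomial

/-- Composition of rational functions: `ratComp R S = R ∘ S`, obtained by evaluating `R`
at the rational function `S`. -/
noncomputable def ratComp {K : Type*} [Field K] (R S : RatFunc K) : RatFunc K :=
  RatFunc.eval (algebraMap K (RatFunc K)) S R

/-! ### Lipschitz bounds on the unit ball -/

/-- On the closed unit ball, `f` is bounded by `M` and is Lipschitz with the same constant `M`. -/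
def RigidOn {K : Type*} [Field K] (v : AbsoluteValue K ℝ) (f : K → K) (M : ℝ) : Prop :=
  (∀ x, v x ≤ 1 → v (f x) ≤ M) ∧
    ∀ x y, v x ≤ 1 → v y ≤ 1 → v (f x - f y) ≤ M * v (x - y)

theorem RigidOn.const {K : Type*} [Field K] {v : AbsoluteValue K ℝ} (c : K) :
    RigidOn v (fun _ => c) (v c) :=
  ⟨fun _ _ => le_rfl, fun x y _ _ => by
    simpa using mul_nonneg (v.nonneg c) (v.nonneg (x - y))⟩

theorem RigidOn.nonneg {K : Type*} [Field K] {v : AbsoluteValue K ℝ} {f : K → K} {M : ℝ}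
    (hf : RigidOn v f M) : 0 ≤ M :=
  (v.nonneg _).trans (hf.1 0 (by simp))

theorem RigidOn.mono {K : Type*} [Field K] {v : AbsoluteValue K ℝ} {f : K → K} {M N : ℝ}
    (hf : RigidOn v f M) (h : M ≤ N) : RigidOn v f N :=
  ⟨fun x hx => (hf.1 x hx).trans h, fun x y hx hy =>
    (hf.2 x y hx hy).trans (mul_le_mul_of_nonneg_right h (v.nonneg _))⟩

theorem RigidOn.add {K : Type*} [Field K] {v : AbsoluteValue K ℝ}
    (hna : ∀ x y : K, v (x + y) ≤ max (v x) (v y)) {f g : K → K} {M : ℝ}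
    (hf : RigidOn v f M) (hg : RigidOn v g M) : RigidOn v (fun x => f x + g x) M := by
  refine ⟨fun x hx => (hna _ _).trans (max_le (hf.1 x hx) (hg.1 x hx)), fun x y hx hy => ?_⟩
  have h : f x + g x - (f y + g y) = (f x - f y) + (g x - g y) := by ring
  rw [h]
  exact (hna _ _).trans (max_le (hf.2 x y hx hy) (hg.2 x y hx hy))

theorem RigidOn.mul {K : Type*} [Field K] {v : AbsoluteValue K ℝ}
    (hna : ∀ x y : K, v (x + y) ≤ max (v x) (v y)) {f g : K → K} {M N : ℝ}
    (hf : RigidOn v f M) (hg : RigidOn v g N) : RigidOn v (fun x => f x * g x) (M * N) := by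
  have hM := hf.nonneg
  have hN := hg.nonneg
  refine ⟨fun x hx => ?_, fun x y hx hy => ?_⟩
  · rw [v.map_mul]
    exact mul_le_mul (hf.1 x hx) (hg.1 x hx) (v.nonneg _) hM
  · have h : f x * g x - f y * g y = f x * (g x - g y) + (f x - f y) * g y := by ring
    rw [h]
    refine (hna _ _).trans (max_le ?_ ?_)
    · rw [v.map_mul, mul_assoc]
      exact mul_le_mul (hf.1 x hx) (hg.2 x y hx hy) (v.nonneg _) hM
    · rw [v.map_mul, mul_right_comm]
      exact mul_le_mul (hf.2 x y hx hy) (hg.1 y hy) (v.nonneg _)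
        (mul_nonneg hM (v.nonneg _))

theorem RigidOn.sum {K : Type*} [Field K] {v : AbsoluteValue K ℝ}
    (hna : ∀ x y : K, v (x + y) ≤ max (v x) (v y)) {ι : Type*} (s : Finset ι)
    {f : ι → K → K} {M : ℝ} (hM : 0 ≤ M) (hf : ∀ i ∈ s, RigidOn v (f i) M) :
    RigidOn v (fun x => ∑ i ∈ s, f i x) M := by
  classical
  induction s using Finset.induction_on with
  | empty => simpa using (RigidOn.const (v := v) 0).mono (by simpa using hM)
  | insert a s ha ih =>
    simp only [Finset.sum_insert ha]
    exact (hf a (by simp)).add hna (ih fun i hi => hf i (by simp [hi]))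

theorem RigidOn.prod {K : Type*} [Field K] {v : AbsoluteValue K ℝ}
    (hna : ∀ x y : K, v (x + y) ≤ max (v x) (v y)) {ι : Type*} (s : Finset ι)
    {f : ι → K → K} (hf : ∀ i ∈ s, RigidOn v (f i) 1) :
    RigidOn v (fun x => ∏ i ∈ s, f i x) 1 := by
  classical
  induction s using Finset.induction_on with
  | empty => simpa using RigidOn.const (v := v) 1
  | insert a s ha ih =>
    simp only [Finset.prod_insert ha]
    simpa using (hf a (by simp)).mul hna (ih fun i hi => hf i (by simp [hi]))

theorem val_natCast_sub {K : Type*} [Field K] {v : AbsoluteValue K ℝ}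
    (hres : ∀ n : ℕ, 0 < n → v (n : K) = 1) {i j : ℕ} (h : i ≠ j) :
    v ((i : K) - (j : K)) = 1 := by
  rcases lt_or_gt_of_ne h with h | h
  · rw [v.map_sub, ← Nat.cast_sub h.le]
    exact hres _ (by omega)
  · rw [← Nat.cast_sub h.le]
    exact hres _ (by omega)

theorem val_natCast_le {K : Type*} [Field K] {v : AbsoluteValue K ℝ}
    (hres : ∀ n : ℕ, 0 < n → v (n : K) = 1) (i : ℕ) : v (i : K) ≤ 1 := by
  rcases Nat.eq_zero_or_pos i with rfl | h
  · simp
  · exact (hres i h).le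

theorem natCast_injective_of_res {K : Type*} [Field K] {v : AbsoluteValue K ℝ}
    (hres : ∀ n : ℕ, 0 < n → v (n : K) = 1) : Function.Injective (Nat.cast : ℕ → K) := by
  intro i j hij
  by_contra h
  have := val_natCast_sub hres h
  simp [hij] at this

/-- A polynomial bounded by `M` on the unit ball is `M`-Lipschitz there. It is interpolated at the
nodes `0, 1, …, d`, whose pairwise differences have absolute value `1`; the Lagrange basis
polynomials are therefore products of functions that are bounded by `1` and `1`-Lipschitz. -/
theorem RigidOn.of_polynomial {K : Type*} [Field K] {v : AbsoluteValue K ℝ}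
    (hna : ∀ x y : K, v (x + y) ≤ max (v x) (v y))
    (hres : ∀ n : ℕ, 0 < n → v (n : K) = 1) (A : K[X]) {M : ℝ}
    (hA : ∀ x, v x ≤ 1 → v (A.eval x) ≤ M) : RigidOn v (fun x => A.eval x) M := by
  have hM : 0 ≤ M := (v.nonneg _).trans (hA 0 (by simp))
  have hbasis : ∀ i j : ℕ, i ≠ j →
      RigidOn v (fun x => (Lagrange.basisDivisor (i : K) (j : K)).eval x) 1 := by
    intro i j hij
    have hinv : v (((i : K) - (j : K))⁻¹) = 1 := by
      rw [map_inv₀, val_natCast_sub hres hij, inv_one]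
    have hlin : RigidOn v (fun x => x - (j : K)) 1 := by
      refine ⟨fun x hx => ?_, fun x y _ _ => by simp⟩
      simp only [sub_eq_add_neg]
      refine (hna _ _).trans (max_le hx ?_)
      rw [v.map_neg]
      exact val_natCast_le hres j
    have := (RigidOn.const (v := v) (((i : K) - (j : K))⁻¹)).mul hna hlin
    rw [hinv, one_mul] at this
    simpa [Lagrange.basisDivisor] using this
  have hint := Lagrange.eq_interpolate (s := Finset.range (A.natDegree + 1))
    (v := (Nat.cast : ℕ → K)) (f := A) (natCast_injective_of_res hres).injOn (by
      rw [Finset.card_range]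
      exact lt_of_le_of_lt degree_le_natDegree (by exact_mod_cast Nat.lt_succ_self _))
  have hfun : (fun x => A.eval x) = fun x => ∑ i ∈ Finset.range (A.natDegree + 1),
      A.eval (i : K) * ∏ j ∈ (Finset.range (A.natDegree + 1)).erase i,
        (Lagrange.basisDivisor (i : K) (j : K)).eval x := by
    funext x
    conv_lhs => rw [hint]
    simp [Lagrange.interpolate_apply, eval_finsetSum, Lagrange.basis, eval_prod]
  rw [hfun]
  refine RigidOn.sum hna _ hM fun i _ => ?_
  have h1 := (RigidOn.const (v := v) (A.eval (i : K))).mul hna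
    (RigidOn.prod hna ((Finset.range (A.natDegree + 1)).erase i)
      (f := fun j x => (Lagrange.basisDivisor (i : K) (j : K)).eval x)
      fun j hj => hbasis i j (Finset.ne_of_mem_erase hj).symm)
  exact h1.mono (by simpa using hA _ (val_natCast_le hres i))

theorem val_sub_eq_of_lt {K : Type*} [Field K] {v : AbsoluteValue K ℝ}
    (hna : ∀ x y : K, v (x + y) ≤ max (v x) (v y)) {x y : K} (h : v x < v y) :
    v (x - y) = v y := by
  refine le_antisymm ?_ ?_
  · rw [sub_eq_add_neg]
    exact (hna _ _).trans (by rw [v.map_neg]; exact max_le h.le le_rfl)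
  · by_contra! hlt
    have h1 := hna x (-(x - y))
    rw [v.map_neg] at h1
    have h2 : x + -(x - y) = y := by ring
    rw [h2] at h1
    exact absurd h1 (not_le.mpr (max_lt h hlt))

/-- A polynomial without zeros in the unit ball has constant absolute value there: its roots `a`
satisfy `|a| > 1`, so `|z - a| = |a|`. -/
theorem val_eval_const_of_no_roots {K : Type*} [Field K] [IsAlgClosed K] {v : AbsoluteValue K ℝ}
    (hna : ∀ x y : K, v (x + y) ≤ max (v x) (v y)) (Q : K[X])
    (hQ : ∀ z, v z ≤ 1 → Q.eval z ≠ 0) (z : K) (hz : v z ≤ 1) :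
    v (Q.eval z) = v (Q.eval 0) := by
  have hQ0 : Q ≠ 0 := by
    rintro rfl
    exact hQ 0 (by simp) (by simp)
  have hroots : ∀ a ∈ Q.roots, v (z - a) = v (0 - a) := by
    intro a ha
    have h1 : 1 < v a := by
      by_contra! h
      exact hQ a h ((mem_roots hQ0).mp ha)
    rw [val_sub_eq_of_lt hna (hz.trans_lt h1),
      val_sub_eq_of_lt hna (x := 0) (by rw [v.map_zero]; linarith)]
  have hsplit : ∀ w, v (Q.eval w) =
      v Q.leadingCoeff * (Q.roots.map fun a => v (w - a)).prod := by
    intro w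
    conv_lhs => rw [(IsAlgClosed.splits Q).eq_prod_roots]
    rw [eval_mul, eval_C, v.map_mul, eval_multiset_prod, map_multiset_prod, Multiset.map_map,
      Multiset.map_map]
    simp
  rw [hsplit, hsplit, Multiset.map_congr rfl hroots]

/-- The Lipschitz estimate for `f(z) - z`, where `f = P / Q` has no poles in the unit ball. -/
theorem rational_sub_lipschitz {K : Type*} [Field K] [IsAlgClosed K] {v : AbsoluteValue K ℝ}
    (hna : ∀ x y : K, v (x + y) ≤ max (v x) (v y))
    (hres : ∀ n : ℕ, 0 < n → v (n : K) = 1) (P Q : K[X])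
    (hQ : ∀ z, v z ≤ 1 → Q.eval z ≠ 0) {ε : ℝ}
    (hε : ∀ z, v z ≤ 1 → v (P.eval z / Q.eval z - z) ≤ ε) (x y : K) (hx : v x ≤ 1)
    (hy : v y ≤ 1) :
    v ((P.eval x / Q.eval x - x) - (P.eval y / Q.eval y - y)) ≤ ε * v (x - y) := by
  set q := v (Q.eval 0) with hq
  have hqpos : 0 < q := v.pos (hQ 0 (by simp))
  have hQv := val_eval_const_of_no_roots hna Q hQ
  have hε0 : 0 ≤ ε := (v.nonneg _).trans (hε 0 (by simp))
  set A : K[X] := P - X * Q with hA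
  have hAe : ∀ z, A.eval z = P.eval z - z * Q.eval z := fun z => by simp [hA]
  have hAQ : ∀ z, v z ≤ 1 → P.eval z / Q.eval z - z = A.eval z / Q.eval z := by
    intro z hz
    rw [hAe]
    field_simp [hQ z hz]
  have hAr : RigidOn v (fun z => A.eval z) (ε * q) := by
    refine RigidOn.of_polynomial hna hres A fun z hz => ?_
    have h := hε z hz
    rwa [hAQ z hz, map_div₀, hQv z hz, div_le_iff₀ hqpos] at h
  have hQr : RigidOn v (fun z => Q.eval z) q :=
    RigidOn.of_polynomial hna hres Q fun z hz => (hQv z hz).le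
  have hsub : A.eval x / Q.eval x - A.eval y / Q.eval y =
      (A.eval x * (Q.eval y - Q.eval x) + Q.eval x * (A.eval x - A.eval y)) /
        (Q.eval x * Q.eval y) := by
    field_simp [hQ x hx, hQ y hy]
    ring
  rw [hAQ x hx, hAQ y hy, hsub, map_div₀, v.map_mul, hQv x hx, hQv y hy,
    div_le_iff₀ (mul_pos hqpos hqpos)]
  refine (hna _ _).trans (max_le ?_ ?_)
  · rw [v.map_mul, v.map_sub]
    calc _ ≤ (ε * q) * (q * v (x - y)) :=
          mul_le_mul (hAr.1 x hx) (hQr.2 x y hx hy) (v.nonneg _) (by positivity)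
      _ = _ := by ring
  · rw [v.map_mul]
    calc _ ≤ q * (ε * q * v (x - y)) :=
          mul_le_mul (hQr.1 x hx) (hAr.2 x y hx hy) (v.nonneg _) hqpos.le
      _ = _ := by ring

/-! ### Iterates of a map close to the identity -/

/-- If `f(z) - z` is bounded by `ε < 1` and `ε`-Lipschitz on the unit ball, then iterating `f` does
not change the distance to the identity, because `f^k(z) - z` differs from `k (f(z) - z)` by at
most `ε |f(z) - z|`. -/
theorem iterate_dist {K : Type*} [Field K] {v : AbsoluteValue K ℝ}
    (hna : ∀ x y : K, v (x + y) ≤ max (v x) (v y))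
    (hres : ∀ n : ℕ, 0 < n → v (n : K) = 1) (f : K → K) {ε : ℝ} (hε1 : ε < 1)
    (hε : ∀ z, v z ≤ 1 → v (f z - z) ≤ ε)
    (hlip : ∀ x y, v x ≤ 1 → v y ≤ 1 → v ((f x - x) - (f y - y)) ≤ ε * v (x - y))
    (z : K) (hz : v z ≤ 1) (k : ℕ) (hk : 0 < k) : v (f^[k] z - z) = v (f z - z) := by
  have hε0 : 0 ≤ ε := (v.nonneg _).trans (hε 0 (by simp))
  have hball : ∀ w, v w ≤ 1 → v (f w) ≤ 1 := by
    intro w hw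
    have h := hna (f w - w) w
    rw [sub_add_cancel] at h
    exact h.trans (max_le ((hε w hw).trans hε1.le) hw)
  have hiter : ∀ i, v (f^[i] z) ≤ 1 := by
    intro i
    induction i with
    | zero => simpa using hz
    | succ i ih => rw [Function.iterate_succ_apply']; exact hball _ ih
  set g := f z - z with hg
  have key : ∀ i : ℕ, v (f^[i] z - z - i * g) ≤ ε * v g := by
    intro i
    induction i with
    | zero => simpa using mul_nonneg hε0 (v.nonneg g)
    | succ i ih =>
      have hdist : v (f^[i] z - z) ≤ v g := by
        have h := hna (f^[i] z - z - i * g) (i * g)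
        rw [sub_add_cancel] at h
        refine h.trans (max_le (ih.trans ?_) ?_)
        · exact mul_le_of_le_one_left (v.nonneg _) hε1.le
        · rw [v.map_mul]
          exact mul_le_of_le_one_left (v.nonneg _) (val_natCast_le hres i)
      have h : f^[i + 1] z - z - ((i + 1 : ℕ) : K) * g =
          (f^[i] z - z - i * g) + ((f (f^[i] z) - f^[i] z) - (f z - z)) := by
        rw [Function.iterate_succ_apply']
        push_cast
        rw [hg]
        ring
      rw [h]
      refine (hna _ _).trans (max_le ih ?_)
      exact (hlip _ _ (hiter i) hz).trans (mul_le_mul_of_nonneg_left hdist hε0)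
  have hkg : v ((k : K) * g) = v g := by rw [v.map_mul, hres k hk, one_mul]
  by_cases hg0 : g = 0
  · have := key k
    rw [hg0] at this ⊢
    simp only [mul_zero, sub_zero, v.map_zero] at this ⊢
    exact le_antisymm this (v.nonneg _)
  · have hlt : v (f^[k] z - z - k * g) < v (k * g) := by
      rw [hkg]
      exact (key k).trans_lt (mul_lt_of_lt_one_left (v.pos hg0) hε1)
    have h := val_sub_eq_of_lt hna (x := f^[k] z - z - k * g) (y := -(k * g))
      (by rwa [v.map_neg])
    rw [sub_neg_eq_add, sub_add_cancel, v.map_neg, hkg] at h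
    exact h

/-! ### Values of rational functions -/

/-- `F` has no pole at `z` and takes the value `c` there. The fraction `p / q` need not be in
lowest terms. -/
def HasValueAt {K : Type*} [Field K] (F : RatFunc K) (z c : K) : Prop :=
  ∃ p q : K[X], q.eval z ≠ 0 ∧ F = algebraMap K[X] (RatFunc K) p / algebraMap K[X] (RatFunc K) q ∧
    p.eval z = c * q.eval z

theorem hasValueAt_iff {K : Type*} [Field K] {F : RatFunc K} {z c : K} :
    HasValueAt F z c ↔ F.denom.eval z ≠ 0 ∧ RatFunc.eval (RingHom.id K) z F = c := by
  simp only [RatFunc.eval, eval₂_id]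
  constructor
  · rintro ⟨p, q, hq, hF, hp⟩
    have hq0 : q ≠ 0 := by rintro rfl; simp at hq
    have hd : F.denom.eval z ≠ 0 := by
      intro h
      obtain ⟨r, hr⟩ := (RatFunc.denom_dvd hq0).mpr ⟨p, hF⟩
      apply hq
      rw [hr, eval_mul, h, zero_mul]
    refine ⟨hd, ?_⟩
    have h := congrArg (eval z) ((RatFunc.num_mul_eq_mul_denom_iff hq0).mpr hF)
    rw [eval_mul, eval_mul, hp] at h
    rw [div_eq_iff hd]
    apply mul_right_cancel₀ hq
    rw [h]; ring
  · rintro ⟨hd, rfl⟩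
    exact ⟨F.num, F.denom, hd, (RatFunc.num_div_denom F).symm, by rw [div_mul_cancel₀ _ hd]⟩

theorem HasValueAt.add {K : Type*} [Field K] {F G : RatFunc K} {z c d : K}
    (hF : HasValueAt F z c) (hG : HasValueAt G z d) : HasValueAt (F + G) z (c + d) := by
  obtain ⟨p, q, hq, rfl, hp⟩ := hF
  obtain ⟨p', q', hq', rfl, hp'⟩ := hG
  have hq0 : q ≠ 0 := by rintro rfl; simp at hq
  have hq0' : q' ≠ 0 := by rintro rfl; simp at hq'
  refine ⟨p * q' + q * p', q * q', by simp [hq, hq'], ?_, ?_⟩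
  · rw [div_add_div _ _ (RatFunc.algebraMap_ne_zero hq0) (RatFunc.algebraMap_ne_zero hq0')]
    simp
  · simp only [eval_add, eval_mul, hp, hp']; ring

theorem HasValueAt.mul {K : Type*} [Field K] {F G : RatFunc K} {z c d : K}
    (hF : HasValueAt F z c) (hG : HasValueAt G z d) : HasValueAt (F * G) z (c * d) := by
  obtain ⟨p, q, hq, rfl, hp⟩ := hF
  obtain ⟨p', q', hq', rfl, hp'⟩ := hG
  refine ⟨p * p', q * q', by simp [hq, hq'], ?_, ?_⟩
  · rw [div_mul_div_comm]; simp
  · simp only [eval_mul, hp, hp']; ring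

theorem HasValueAt.inv {K : Type*} [Field K] {F : RatFunc K} {z c : K}
    (hF : HasValueAt F z c) (hc : c ≠ 0) : HasValueAt F⁻¹ z c⁻¹ := by
  obtain ⟨p, q, hq, rfl, hp⟩ := hF
  refine ⟨q, p, by simp [hp, hq, hc], by rw [inv_div], ?_⟩
  rw [hp, inv_mul_cancel_left₀ hc]

theorem HasValueAt.algebraMap {K : Type*} [Field K] (a z : K) :
    HasValueAt (algebraMap K (RatFunc K) a) z a :=
  ⟨Polynomial.C a, 1, by simp, by simp, by simp⟩

theorem HasValueAt.aeval {K : Type*} [Field K] {T : RatFunc K} {z c : K}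
    (hT : HasValueAt T z c) (p : K[X]) : HasValueAt (Polynomial.aeval T p) z (p.eval c) := by
  induction p using Polynomial.induction_on with
  | C a => simpa using HasValueAt.algebraMap a z
  | add p q hp hq => simpa using hp.add hq
  | monomial n a h => simpa [pow_succ, mul_assoc] using h.mul hT

theorem HasValueAt.ratComp {K : Type*} [Field K] {S T : RatFunc K} {z c d : K}
    (hT : HasValueAt T z c) (hS : HasValueAt S c d) : HasValueAt (ratComp S T) z d := by
  obtain ⟨hd, rfl⟩ := hasValueAt_iff.mp hS
  have h := (hT.aeval S.num).mul ((hT.aeval S.denom).inv hd)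
  rw [← div_eq_mul_inv, ← div_eq_mul_inv] at h
  simpa only [_root_.ratComp, RatFunc.eval, eval₂_id, ← Polynomial.aeval_def] using h

/-! ### Substitution as an endomorphism of the function field -/

theorem aeval_injective_of_transcendental {K : Type*} [Field K] {T : RatFunc K}
    (hT : Transcendental K T) : Function.Injective (Polynomial.aeval (R := K) T) :=
  transcendental_iff_injective.mp hT

/-- Substitution of a nonconstant rational function `T`, as a `K`-algebra endomorphism of
`K(X)`. -/
noncomputable def substHom {K : Type*} [Field K] (T : RatFunc K) (hT : Transcendental K T) :
    RatFunc K →ₐ[K] RatFunc K :=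
  RatFunc.liftAlgHom (Polynomial.aeval T)
    (nonZeroDivisors_le_comap_nonZeroDivisors_of_injective _
      (aeval_injective_of_transcendental hT))

theorem substHom_apply {K : Type*} [Field K] (T : RatFunc K) (hT : Transcendental K T)
    (S : RatFunc K) : substHom T hT S = ratComp S T := by
  rw [substHom, RatFunc.liftAlgHom_apply]
  rfl

theorem algHom_eq_ratComp {K : Type*} [Field K] (φ : RatFunc K →ₐ[K] RatFunc K)
    (S : RatFunc K) : φ S = ratComp S (φ RatFunc.X) := by
  have h : ∀ p : K[X], φ (algebraMap K[X] (RatFunc K) p) = Polynomial.aeval (φ RatFunc.X) p := by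
    intro p
    rw [← RatFunc.aeval_X_left_eq_algebraMap, Polynomial.aeval_algHom_apply]
  conv_lhs => rw [← RatFunc.num_div_denom S]
  rw [map_div₀, h, h]
  rfl

/-- The iterates of `R` are the images of `X` under the powers of the substitution of `R`. -/
theorem iterate_eq_pow {K : Type*} [Field K] (R : RatFunc K) (hR : Transcendental K R) (n : ℕ) :
    (ratComp R)^[n] RatFunc.X = (substHom R hR ^ n) RatFunc.X := by
  induction n with
  | zero => simp
  | succ n ih =>
    rw [Function.iterate_succ_apply', ih, ← algHom_eq_ratComp, pow_succ, AlgHom.mul_apply]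
    congr 1
    rw [substHom_apply]
    simp [ratComp]

theorem iterate_add_eq {K : Type*} [Field K] (R : RatFunc K) (hR : Transcendental K R) (a b : ℕ) :
    (ratComp R)^[a + b] RatFunc.X =
      ratComp ((ratComp R)^[b] RatFunc.X) ((ratComp R)^[a] RatFunc.X) := by
  simp only [iterate_eq_pow R hR]
  rw [pow_add, AlgHom.mul_apply, ← algHom_eq_ratComp]

theorem ratFunc_transcendental {K : Type*} [Field K] {R : RatFunc K}
    (hdeg : 2 ≤ max R.num.natDegree R.denom.natDegree) : Transcendental K R := by
  apply RatFunc.transcendental_of_ne_C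
  rintro ⟨c, rfl⟩
  simp at hdeg

/-- An iterate of a rational function of degree at least `2` is never the identity. -/
theorem iterate_ne_X {K : Type*} [Field K] {R : RatFunc K}
    (hdeg : 2 ≤ max R.num.natDegree R.denom.natDegree) {n : ℕ} (hn : 0 < n) :
    (ratComp R)^[n] RatFunc.X ≠ RatFunc.X := by
  intro h
  have hR := ratFunc_transcendental hdeg
  obtain ⟨k, rfl⟩ : ∃ k, n = k + 1 := ⟨n - 1, by omega⟩
  rw [iterate_eq_pow R hR, pow_succ', AlgHom.mul_apply, substHom_apply] at h
  set S := (substHom R hR ^ k) RatFunc.X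
  have hmem : (RatFunc.X : RatFunc K) ∈ IntermediateField.adjoin K {R} := by
    rw [IntermediateField.mem_adjoin_simple_iff]
    exact ⟨S.num, S.denom, h.symm⟩
  have htop : IntermediateField.adjoin K {R} = ⊤ := by
    rw [eq_top_iff, ← RatFunc.adjoin_X, IntermediateField.adjoin_simple_le_iff]
    exact hmem
  have hfin := RatFunc.finrank_eq_max_natDegree R
  rw [htop, IntermediateField.finrank_top] at hfin
  omega

/-- If `R^a` has no poles in the unit ball and maps it to itself, the values of `R^{ak}` there are those
of the `k`-th iterate of the map `z ↦ R^a(z)`. -/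
theorem hasValueAt_iterate {K : Type*} [Field K] {v : AbsoluteValue K ℝ} {R : RatFunc K}
    (hR : Transcendental K R) (a : ℕ) (f : K → K) (hball : ∀ z, v z ≤ 1 → v (f z) ≤ 1)
    (hf : ∀ z, v z ≤ 1 → HasValueAt ((ratComp R)^[a] RatFunc.X) z (f z)) (z : K) (hz : v z ≤ 1)
    (k : ℕ) : v (f^[k] z) ≤ 1 ∧ HasValueAt ((ratComp R)^[a * k] RatFunc.X) z (f^[k] z) := by
  induction k with
  | zero => exact ⟨by simpa using hz, by simp [hasValueAt_iff]⟩
  | succ k ih =>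
    rw [Function.iterate_succ_apply', mul_add, mul_one, iterate_add_eq R hR]
    exact ⟨hball _ ih.1, ih.2.ratComp (hf _ ih.1)⟩

/-- An iterate `R^a` at uniform distance less than `1` from the identity on the unit ball has, at
each point of the ball, the same distance to the identity as each of its own iterates. -/
theorem dist_iterate_mul {K : Type*} [Field K] [IsAlgClosed K] {v : AbsoluteValue K ℝ}
    (hna : ∀ x y : K, v (x + y) ≤ max (v x) (v y))
    (hres : ∀ n : ℕ, 0 < n → v (n : K) = 1) {R : RatFunc K} (hR : Transcendental K R)
    (a : ℕ) (hpole : ∀ z : K, v z ≤ 1 → ((ratComp R)^[a] RatFunc.X).denom.eval z ≠ 0)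
    {ε : ℝ} (hε1 : ε < 1)
    (hε : ∀ z : K, v z ≤ 1 →
      v (RatFunc.eval (RingHom.id K) z ((ratComp R)^[a] RatFunc.X) - z) ≤ ε)
    (z : K) (hz : v z ≤ 1) (k : ℕ) (hk : 0 < k) :
    v (RatFunc.eval (RingHom.id K) z ((ratComp R)^[a * k] RatFunc.X) - z) =
      v (RatFunc.eval (RingHom.id K) z ((ratComp R)^[a] RatFunc.X) - z) := by
  set F := (ratComp R)^[a] RatFunc.X with hF
  set f : K → K := fun w => RatFunc.eval (RingHom.id K) w F with hf
  have hball : ∀ w, v w ≤ 1 → v (f w) ≤ 1 := by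
    intro w hw
    have h := hna (f w - w) w
    rw [sub_add_cancel] at h
    exact h.trans (max_le ((hε w hw).trans hε1.le) hw)
  have hval := (hasValueAt_iterate hR a f hball
    (fun w hw => hasValueAt_iff.mpr ⟨hpole w hw, rfl⟩) z hz k).2
  rw [(hasValueAt_iff.mp hval).2]
  have hfe : ∀ w, f w = F.num.eval w / F.denom.eval w := fun w => by
    simp [hf, RatFunc.eval]
  refine iterate_dist hna hres f hε1 hε (fun x y hx hy => ?_) z hz k hk
  simp only [hfe]
  refine rational_sub_lipschitz hna hres F.num F.denom hpole (fun w hw => ?_) x y hx hy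
  rw [← hfe]
  exact hε w hw

/-- Let `(K, v)` be a complete algebraically closed field with a
nontrivial nonarchimedean absolute value of residue characteristic zero, and let
`R ∈ K(z)` have degree at least `2`.  Then there is no strictly increasing sequence
`(n_j)` of positive integers such that each iterate `R^{n_j}` has no poles in the closed
unit ball `𝒪_K = {z : v z ≤ 1}` and `sup_{z ∈ 𝒪_K} v (R^{n_j}(z) - z) → 0`. -/
theorem stmt_1 {K : Type*} [Field K] [IsAlgClosed K]
    (v : AbsoluteValue K ℝ)
    (hna : ∀ x y : K, v (x + y) ≤ max (v x) (v y))
    (hnontriv : ∃ x : K, x ≠ 0 ∧ v x ≠ 1)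
    (hcomplete : ∀ f : ℕ → K,
      (∀ ε : ℝ, 0 < ε → ∃ N : ℕ, ∀ m ≥ N, ∀ n ≥ N, v (f m - f n) < ε) →
      ∃ L : K, ∀ ε : ℝ, 0 < ε → ∃ N : ℕ, ∀ n ≥ N, v (f n - L) < ε)
    (hres : ∀ n : ℕ, 0 < n → v (n : K) = 1)
    (R : RatFunc K)
    (hdeg : 2 ≤ max R.num.natDegree R.denom.natDegree) :
    ¬ ∃ m : ℕ → ℕ, StrictMono m ∧ (∀ j, 0 < m j) ∧
      (∀ j, ∀ z : K, v z ≤ 1 → ((ratComp R)^[m j] RatFunc.X).denom.eval z ≠ 0) ∧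
      (∀ ε : ℝ, 0 < ε → ∃ J : ℕ, ∀ j ≥ J, ∀ z : K, v z ≤ 1 →
        v (RatFunc.eval (RingHom.id K) z ((ratComp R)^[m j] RatFunc.X) - z) < ε) := by
  rintro ⟨m, -, hpos, hpole, hconv⟩
  have hR := ratFunc_transcendental hdeg
  obtain ⟨J, hJ⟩ := hconv (1 / 2) (by norm_num)
  have hhalf : (1 / 2 : ℝ) < 1 := by norm_num
  -- The distance to the identity at `z` is the same for all `R^{m j}` with `j ≥ J`.
  have hsame : ∀ j ≥ J, ∀ z : K, v z ≤ 1 →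
      v (RatFunc.eval (RingHom.id K) z ((ratComp R)^[m J] RatFunc.X) - z) =
      v (RatFunc.eval (RingHom.id K) z ((ratComp R)^[m j] RatFunc.X) - z) := by
    intro j hj z hz
    rw [← dist_iterate_mul hna hres hR (m J) (hpole J) hhalf
        (fun w hw => (hJ J le_rfl w hw).le) z hz (m j) (hpos j),
      ← dist_iterate_mul hna hres hR (m j) (hpole j) hhalf
        (fun w hw => (hJ j hj w hw).le) z hz (m J) (hpos J), mul_comm]
  set F := (ratComp R)^[m J] RatFunc.X with hF
  have hid : ∀ z : K, v z ≤ 1 → RatFunc.eval (RingHom.id K) z F = z := by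
    intro z hz
    by_contra hne
    obtain ⟨N, hN⟩ := hconv _ (v.pos (sub_ne_zero.mpr hne))
    have h := hN (max J N) (le_max_right _ _) z hz
    rw [← hsame (max J N) (le_max_left _ _) z hz] at h
    exact lt_irrefl _ h
  -- The natural numbers are infinitely many points of the unit ball.
  have hnum : F.num = X * F.denom := by
    refine Polynomial.eq_of_infinite_eval_eq _ _
      ((Set.infinite_range_of_injective (natCast_injective_of_res hres)).mono ?_)
    rintro _ ⟨n, rfl⟩
    have hn := val_natCast_le hres n
    have h := hid _ hn
    simp only [RatFunc.eval, eval₂_id] at h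
    rw [div_eq_iff (hpole J _ hn)] at h
    simpa using h
  refine iterate_ne_X hdeg (hpos J) (?_ : F = RatFunc.X)
  rw [← RatFunc.num_div_denom F, hnum, map_mul, RatFunc.algebraMap_X,
    mul_div_cancel_right₀ _ (RatFunc.algebraMap_ne_zero F.denom_ne_zero)]
end

section
/- Let K be a field equipped with a nonarchimedean absolute value |·|, with respect to which K is complete and algebraically closed, and let 𝔪_K = {z ∈ K : |z| < 1} be the open unit ball. Let T ∈ K(z) be a rational function having no poles and no zeros in 𝔪_K and satisfying sup_{z ∈ 𝔪_K} |T(z)| < 1. Then there exists a ∈ K with 0 < |a| < 1 such that |T(z) − a| < |a| for every z ∈ 𝔪_K; that is, the image T(𝔪_K) is contained in an open ball centered at a nonzero point a and of radius |a|. -/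
open Polynomial

/-!
The point `a = T 0` works. Factor numerator and denominator of `T` over the algebraically closed
field `K`. A linear factor `X - α` without zeros in the open unit ball has `|α| ≥ 1`, so there
`|(z - α) - (0 - α)| = |z| < |α|`. The property `|p z - p 0| < |p 0|` says that
`p z / p 0` is a one-unit (an element of `1 + 𝔪_K`); one-units form a group, so the property
passes from linear factors to polynomials (`eval_sub_eval_zero_lt`) and to the quotient `T`.
-/

/-- If `x / a` and `y / b` are one-units, then so is `(x * y) / (a * b)`. -/
lemma mul_sub_mul_lt {K : Type*} [Field K] (v : AbsoluteValue K ℝ)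
    (hna : ∀ x y : K, v (x + y) ≤ max (v x) (v y)) {x a y b : K}
    (hx : v (x - a) < v a) (hy : v (y - b) < v b) : v (x * y - a * b) < v (a * b) := by
  have ha : 0 < v a := (v.nonneg _).trans_lt hx
  have hb : 0 < v b := (v.nonneg _).trans_lt hy
  have hyb : v y ≤ v b := by
    have h := hna (y - b) b
    rw [sub_add_cancel] at h
    exact h.trans (max_le hy.le le_rfl)
  have e : x * y - a * b = (x - a) * y + a * (y - b) := by ring
  rw [e]
  refine (hna _ _).trans_lt (max_lt ?_ ?_)
  · rw [v.map_mul, v.map_mul]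
    exact (mul_le_mul_of_nonneg_left hyb (v.nonneg _)).trans_lt (mul_lt_mul_of_pos_right hx hb)
  · rw [v.map_mul, v.map_mul]
    exact mul_lt_mul_of_pos_left hy ha

/-- If `y / b` is a one-unit, then so is `y⁻¹ / b⁻¹`. -/
lemma inv_sub_inv_lt {K : Type*} [Field K] (v : AbsoluteValue K ℝ)
    (hna : ∀ x y : K, v (x + y) ≤ max (v x) (v y)) {y b : K}
    (hy : v (y - b) < v b) : v (y⁻¹ - b⁻¹) < v b⁻¹ := by
  have hb : 0 < v b := (v.nonneg _).trans_lt hy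
  have hb0 : b ≠ 0 := v.pos_iff.mp hb
  have hby : v b ≤ v y := by
    have h := hna (b - y) y
    rw [sub_add_cancel, v.map_sub] at h
    exact (le_max_iff.mp h).resolve_left (not_le.mpr hy)
  have hy0 : y ≠ 0 := v.pos_iff.mp (hb.trans_le hby)
  have e : y⁻¹ - b⁻¹ = (b - y) * y⁻¹ * b⁻¹ := by field_simp
  have hbi : 0 < v b⁻¹ := v.pos (inv_ne_zero hb0)
  rw [e, v.map_mul, v.map_mul, v.map_sub, map_inv₀ v y]
  have h1 : v (y - b) * (v y)⁻¹ < 1 := by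
    rw [← div_eq_mul_inv, div_lt_one (hb.trans_le hby)]
    exact hy.trans_le hby
  exact mul_lt_of_lt_one_left hbi h1

/-- A polynomial without zeros in the open unit ball is, up to one-units, constant there. -/
lemma eval_sub_eval_zero_lt {K : Type*} [Field K] [IsAlgClosed K] (v : AbsoluteValue K ℝ)
    (hna : ∀ x y : K, v (x + y) ≤ max (v x) (v y)) (p : K[X])
    (hp : ∀ z : K, v z < 1 → p.eval z ≠ 0) {z : K} (hz : v z < 1) :
    v (p.eval z - p.eval 0) < v (p.eval 0) := by
  have hp0 : p ≠ 0 := by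
    rintro rfl
    exact hp z hz eval_zero
  have hroots : ∀ α ∈ p.roots, 1 ≤ v α := fun α hα => by
    by_contra! h
    exact hp α h (isRoot_of_mem_roots hα)
  have key : ∀ s : Multiset K, (∀ α ∈ s, 1 ≤ v α) →
      v ((s.map fun α => X - C α).prod.eval z - (s.map fun α => X - C α).prod.eval 0) <
        v ((s.map fun α => X - C α).prod.eval 0) := by
    intro s
    induction s using Multiset.induction_on with
    | empty => simp
    | cons α s ih =>
      intro hs
      simp only [Multiset.map_cons, Multiset.prod_cons, eval_mul]
      refine mul_sub_mul_lt v hna ?_ (ih fun β hβ => hs β (Multiset.mem_cons_of_mem hβ))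
      simpa using hz.trans_le (hs α (Multiset.mem_cons_self α s))
  rw [(IsAlgClosed.splits p).eq_prod_roots]
  simp only [eval_mul, eval_C]
  refine mul_sub_mul_lt v hna ?_ (key _ hroots)
  simpa using hp0

/-- Let `(K, v)` be a complete algebraically closed field with a
nonarchimedean absolute value and let `𝔪_K = {z : v z < 1}`.  If `T ∈ K(z)` has no poles
and no zeros in `𝔪_K` and `sup_{z ∈ 𝔪_K} v (T z) < 1`, then there is `a ∈ K` with
`0 < v a < 1` and `v (T z - a) < v a` for all `z ∈ 𝔪_K`. -/
theorem stmt_2 {K : Type*} [Field K] [IsAlgClosed K]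
    (v : AbsoluteValue K ℝ)
    (hna : ∀ x y : K, v (x + y) ≤ max (v x) (v y))
    (hcomplete : ∀ f : ℕ → K,
      (∀ ε : ℝ, 0 < ε → ∃ N : ℕ, ∀ m ≥ N, ∀ n ≥ N, v (f m - f n) < ε) →
      ∃ L : K, ∀ ε : ℝ, 0 < ε → ∃ N : ℕ, ∀ n ≥ N, v (f n - L) < ε)
    (T : RatFunc K)
    (hpole : ∀ z : K, v z < 1 → T.denom.eval z ≠ 0)
    (hzero : ∀ z : K, v z < 1 → T.num.eval z ≠ 0)
    (hsup : ∃ c : ℝ, c < 1 ∧ ∀ z : K, v z < 1 →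
      v (RatFunc.eval (RingHom.id K) z T) ≤ c) :
    ∃ a : K, 0 < v a ∧ v a < 1 ∧ ∀ z : K, v z < 1 →
      v (RatFunc.eval (RingHom.id K) z T - a) < v a := by
  have h : ∀ z : K, v z < 1 →
      v (RatFunc.eval (RingHom.id K) z T - RatFunc.eval (RingHom.id K) 0 T) <
        v (RatFunc.eval (RingHom.id K) 0 T) := by
    intro z hz
    simp only [RatFunc.eval, eval₂_id, div_eq_mul_inv]
    exact mul_sub_mul_lt v hna (eval_sub_eval_zero_lt v hna _ hzero hz)
      (inv_sub_inv_lt v hna (eval_sub_eval_zero_lt v hna _ hpole hz))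
  have h0 : v (0 : K) < 1 := by simp
  obtain ⟨c, hc, hT⟩ := hsup
  exact ⟨_, (v.nonneg _).trans_lt (h 0 h0), (hT 0 h0).trans_lt hc, h⟩
end

section
/- Let K be an algebraically closed field equipped with a nonarchimedean absolute value |·|, let P ∈ K[z] be a nonconstant polynomial, let z₀ ∈ K and let r > 0 be a real number. Write the Taylor expansion of P at z₀ as P(z₀ + h) = ∑_{j≥0} c_j h^j. Then the image of the closed ball {z ∈ K : |z − z₀| ≤ r} under P is exactly the closed ball {w ∈ K : |w − P(z₀)| ≤ s}, where s = max_{1 ≤ j ≤ deg P} |c_j| r^j. -/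
open Polynomial

/-!
After translating by `z₀`, the image lies in the ball of radius `s` by the ultrametric
inequality applied to `P(z₀ + h) - P(z₀) = ∑_{j ≥ 1} c_j h^j`.

For surjectivity, let `Q(h) = P(z₀ + h) - w`. If every root of `Q` had absolute value larger
than `r`, then, since `Q` is a product of linear factors, its constant coefficient would strictly
dominate: `|q_j| r^j < |q_0|` for all `j ≥ 1` (`coeff_lt_of_roots_large`). But `q_j = c_j` for
`j ≥ 1` and `q_0 = P(z₀) - w`, so this would give `s < |w - P(z₀)|`.
-/

/-- A nonzero polynomial without roots in the closed ball of radius `r` around `0` has a strictly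
dominant constant coefficient. The induction splits off one linear factor `X - a` with
`r < |a|` at a time. -/
lemma coeff_lt_of_roots_large {K : Type*} [Field K] [IsAlgClosed K]
    (v : AbsoluteValue K ℝ) (hna : ∀ x y : K, v (x + y) ≤ max (v x) (v y))
    (r : ℝ) (hr : 0 < r) (n : ℕ) :
    ∀ Q : K[X], Q ≠ 0 → Q.natDegree = n → (∀ a, Q.IsRoot a → r < v a) →
      Q.coeff 0 ≠ 0 ∧ ∀ j, 1 ≤ j → v (Q.coeff j) * r ^ j < v (Q.coeff 0) := by
  induction n with
  | zero =>
    intro Q hQ hd _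
    obtain ⟨c, rfl⟩ := natDegree_eq_zero.mp hd
    have hc : c ≠ 0 := by simpa using hQ
    refine ⟨by simpa using hc, fun j hj => ?_⟩
    rw [coeff_C_of_ne_zero (by lia), coeff_C_zero]
    simpa using v.pos hc
  | succ n ih =>
    intro Q hQ hd hroots
    obtain ⟨a, ha⟩ := IsAlgClosed.exists_root Q
      (by rw [degree_eq_natDegree hQ, hd]; exact_mod_cast Nat.succ_ne_zero n)
    obtain ⟨f, rfl⟩ := dvd_iff_isRoot.mpr ha
    have hf : f ≠ 0 := right_ne_zero_of_mul hQ
    have hfd : f.natDegree = n := by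
      rw [natDegree_mul (X_sub_C_ne_zero a) hf, natDegree_X_sub_C] at hd
      lia
    obtain ⟨h0, hj⟩ := ih f hf hfd fun b hb => hroots b (by
      simp only [IsRoot.def] at hb
      simp [hb])
    have hra : r < v a := hroots a ha
    have hva : 0 < v a := hr.trans hra
    have hv0 : 0 < v (f.coeff 0) := v.pos h0
    have hle : ∀ j, v (f.coeff j) * r ^ j ≤ v (f.coeff 0) := by
      rintro (_ | j)
      · simp
      · exact (hj _ (by lia)).le
    have hc0 : ((X - C a) * f).coeff 0 = -(a * f.coeff 0) := by simp [sub_mul]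
    refine ⟨by rw [hc0]; exact neg_ne_zero.mpr (mul_ne_zero (v.pos_iff.mp hva) h0), ?_⟩
    rintro (_ | j) h1
    · lia
    have hc : ((X - C a) * f).coeff (j + 1) = f.coeff j + -(a * f.coeff (j + 1)) := by
      rw [sub_mul, coeff_sub, coeff_X_mul, coeff_C_mul, sub_eq_add_neg]
    rw [hc, hc0, v.map_neg, v.map_mul]
    refine (mul_le_mul_of_nonneg_right (hna _ _) (by positivity)).trans_lt ?_
    rw [max_mul_of_nonneg _ _ (by positivity), v.map_neg, v.map_mul]
    refine max_lt ?_ ?_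
    · calc v (f.coeff j) * r ^ (j + 1) = r * (v (f.coeff j) * r ^ j) := by ring
        _ ≤ r * v (f.coeff 0) := by gcongr; exact hle j
        _ < v a * v (f.coeff 0) := by gcongr
    · rw [mul_assoc]
      exact mul_lt_mul_of_pos_left (hj _ h1) hva

/-- Let `K` be an algebraically closed field with a nonarchimedean
absolute value `v`, `P` a nonconstant polynomial, `z₀ ∈ K`, `r > 0`, and let
`s = max_{1 ≤ j ≤ deg P} v c_j * r ^ j` where the `c_j` are the Taylor coefficients of
`P` at `z₀`.  Then the image under `P` of the closed ball `{z : v (z - z₀) ≤ r}` is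
exactly the closed ball `{w : v (w - P z₀) ≤ s}`. -/
theorem stmt_6 {K : Type*} [Field K] [IsAlgClosed K]
    (v : AbsoluteValue K ℝ)
    (hna : ∀ x y : K, v (x + y) ≤ max (v x) (v y))
    (P : Polynomial K) (hP : 1 ≤ P.natDegree)
    (z₀ : K) (r : ℝ) (hr : 0 < r) (s : ℝ)
    (hs : IsGreatest ((fun j : ℕ => v ((Polynomial.taylor z₀ P).coeff j) * r ^ j) ''
      Set.Icc 1 P.natDegree) s) :
    (fun z : K => P.eval z) '' {z : K | v (z - z₀) ≤ r}
      = {w : K | v (w - P.eval z₀) ≤ s} := by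
  obtain ⟨⟨m, ⟨hm1, hm2⟩, hms⟩, hub⟩ := hs
  have hs0 : 0 ≤ s := by
    rw [← hms]
    exact mul_nonneg (v.nonneg _) (by positivity)
  ext w
  constructor
  · rintro ⟨z, hz, rfl⟩
    simp only [Set.mem_ofPred_eq] at hz ⊢
    have hexp : P.eval z - P.eval z₀ = ∑ j ∈ Finset.range P.natDegree,
        (taylor z₀ P).coeff (j + 1) * (z - z₀) ^ (j + 1) := by
      have h := taylor_eval z₀ P (z - z₀)
      rw [sub_add_cancel, eval_eq_sum_range, natDegree_taylor, Finset.sum_range_succ',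
        taylor_coeff_zero, pow_zero, mul_one] at h
      rw [← h, add_sub_cancel_right]
    rw [hexp]
    refine Finset.sum_induction _ (fun x => v x ≤ s)
      (fun x y hx hy => (hna x y).trans (max_le hx hy)) (by simpa using hs0) fun j hj => ?_
    rw [v.map_mul, v.map_pow]
    refine le_trans ?_ (hub ⟨j + 1, ⟨by lia, by simpa using hj⟩, rfl⟩)
    exact mul_le_mul_of_nonneg_left (pow_le_pow_left₀ (v.nonneg _) hz _) (v.nonneg _)
  · intro hw
    simp only [Set.mem_ofPred_eq] at hw
    by_contra hcon
    have hd : (taylor z₀ P - C w).natDegree = P.natDegree := by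
      rw [natDegree_sub_C, natDegree_taylor]
    have hQ : taylor z₀ P - C w ≠ 0 := by
      intro h
      rw [h, natDegree_zero] at hd
      lia
    have key := (coeff_lt_of_roots_large v hna r hr _ _ hQ rfl fun a ha => by
      by_contra! hle
      refine hcon ⟨a + z₀, by simpa using hle, ?_⟩
      rw [IsRoot.def, eval_sub, eval_C, taylor_eval] at ha
      exact sub_eq_zero.mp ha).2 m hm1
    rw [coeff_sub, coeff_sub, coeff_C_of_ne_zero (by lia), coeff_C_zero, sub_zero,
      taylor_coeff_zero, v.map_sub (P.eval z₀) w] at key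
    exact absurd (key.trans_le hw) (by simp [← hms])
end

section
/- Let K be a field equipped with a nonarchimedean absolute value |·| and let R ∈ K(z) be a rational function. Let z₀ ∈ K be a point which is not a pole of R and such that R′(z₀) ≠ 0. Then there exists δ > 0 such that for all z, w ∈ K with |z − z₀| ≤ δ and |w − z₀| ≤ δ, the function R is defined at z and at w and |R(z) − R(w)| = |R′(z₀)| · |z − w|. -/
/-!
If `v` is trivial, the ball of radius `1/2` around `z₀` is `{z₀}` and the claim is `0 = 0`.
Otherwise `v` makes `K` a nontrivially normed field, over which `R = P / Q` is *strictly*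
differentiable at `z₀` (`hasStrictDerivAt_ratFunc_eval`): for `z, w` close to `z₀`,
`|R(z) - R(w) - R′(z₀)(z - w)| ≤ (|R′(z₀)| / 2) |z - w|`. Hence, when `z ≠ w`, the error term is
strictly smaller than `|R′(z₀)(z - w)|`, and the ultrametric inequality forces
`|R(z) - R(w)| = |R′(z₀)| |z - w|`. The denominator does not vanish near `z₀` by continuity.
-/

open Polynomial

/-- The formal derivative of a rational function, via the quotient rule on the
numerator/denominator in lowest terms. -/
noncomputable def ratDeriv {K : Type*} [Field K] (R : RatFunc K) : RatFunc K :=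
  RatFunc.mk (Polynomial.derivative R.num * R.denom - R.num * Polynomial.derivative R.denom)
    (R.denom ^ 2)

/-- The denominator of `ratDeriv R` in lowest terms may be a proper divisor of `R.denom ^ 2`; this
says that the value at a non-pole of `R` is nevertheless given by the quotient rule. -/
lemma eval_ratDeriv {K : Type*} [Field K] (R : RatFunc K) (z : K) (hz : R.denom.eval z ≠ 0) :
    RatFunc.eval (RingHom.id K) z (ratDeriv R) =
      (R.num.derivative.eval z * R.denom.eval z - R.num.eval z * R.denom.derivative.eval z) /
        R.denom.eval z ^ 2 := by
  have hQ : R.denom ^ 2 ≠ 0 := pow_ne_zero 2 R.denom_ne_zero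
  set p := derivative R.num * R.denom - R.num * derivative R.denom with hp
  have hS : ratDeriv R = algebraMap K[X] (RatFunc K) p / algebraMap K[X] (RatFunc K) (R.denom ^ 2) :=
    RatFunc.mk_eq_div _ _
  have hden : (ratDeriv R).denom.eval z ≠ 0 := by
    intro h0
    have hdvd : (ratDeriv R).denom ∣ R.denom ^ 2 := by
      rw [hS]
      exact RatFunc.denom_div_dvd _ _
    have h1 := eval_dvd (x := z) hdvd
    rw [h0, zero_dvd_iff, eval_pow] at h1
    exact hz (pow_eq_zero_iff two_ne_zero |>.mp h1)
  have hcross : (ratDeriv R).num * R.denom ^ 2 = p * (ratDeriv R).denom := by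
    have h := (RatFunc.num_div_denom (ratDeriv R)).trans hS
    rw [div_eq_div_iff (RatFunc.algebraMap_ne_zero (RatFunc.denom_ne_zero _))
      (RatFunc.algebraMap_ne_zero hQ), ← map_mul, ← map_mul] at h
    exact RatFunc.algebraMap_injective K h
  have h2 := congrArg (eval z) hcross
  rw [RatFunc.eval, eval₂_id, eval₂_id, div_eq_div_iff hden (pow_ne_zero 2 hz)]
  simpa [hp] using h2

lemma hasStrictDerivAt_ratFunc_eval {K : Type*} [NontriviallyNormedField K] (R : RatFunc K) (z₀ : K)
    (hpole : R.denom.eval z₀ ≠ 0) :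
    HasStrictDerivAt (fun z => RatFunc.eval (RingHom.id K) z R)
      (RatFunc.eval (RingHom.id K) z₀ (ratDeriv R)) z₀ := by
  rw [eval_ratDeriv R z₀ hpole]
  simp only [RatFunc.eval, eval₂_id]
  exact (R.num.hasStrictDerivAt z₀).fun_div (R.denom.hasStrictDerivAt z₀) hpole

/-- The statement for a norm, which is available once the absolute value is nontrivial. -/
lemma exists_ball_norm_sub_eq {K : Type*} [NontriviallyNormedField K]
    (hna : ∀ x y : K, ‖x + y‖ ≤ max ‖x‖ ‖y‖)
    (R : RatFunc K) (z₀ : K)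
    (hpole : R.denom.eval z₀ ≠ 0)
    (hderiv : RatFunc.eval (RingHom.id K) z₀ (ratDeriv R) ≠ 0) :
    ∃ δ : ℝ, 0 < δ ∧ ∀ z w : K, ‖z - z₀‖ ≤ δ → ‖w - z₀‖ ≤ δ →
      R.denom.eval z ≠ 0 ∧ R.denom.eval w ≠ 0 ∧
      ‖RatFunc.eval (RingHom.id K) z R - RatFunc.eval (RingHom.id K) w R‖
        = ‖RatFunc.eval (RingHom.id K) z₀ (ratDeriv R)‖ * ‖z - w‖ := by
  have hD := hasStrictDerivAt_ratFunc_eval R z₀ hpole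
  set D := RatFunc.eval (RingHom.id K) z₀ (ratDeriv R)
  have hDpos : 0 < ‖D‖ := norm_pos_iff.mpr hderiv
  have hE := hD.hasStrictFDerivAt.isLittleO.def (half_pos hDpos)
  have hQ : ∀ᶠ z in nhds z₀, R.denom.eval z ≠ 0 :=
    R.denom.continuous.continuousAt.eventually_ne hpole
  obtain ⟨ε₁, hε₁, h₁⟩ := Metric.eventually_nhds_iff.mp hE
  obtain ⟨ε₂, hε₂, h₂⟩ := Metric.eventually_nhds_iff.mp hQ
  have hε : 0 < min ε₁ ε₂ := lt_min hε₁ hε₂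
  refine ⟨min ε₁ ε₂ / 2, half_pos hε, fun z w hz hw => ?_⟩
  rw [← dist_eq_norm] at hz hw
  have hz' : dist z z₀ < min ε₁ ε₂ := hz.trans_lt (half_lt_self hε)
  have hw' : dist w z₀ < min ε₁ ε₂ := hw.trans_lt (half_lt_self hε)
  refine ⟨h₂ (hz'.trans_le (min_le_right _ _)), h₂ (hw'.trans_le (min_le_right _ _)), ?_⟩
  rcases eq_or_ne z w with rfl | hne
  · simp
  have hzw : 0 < ‖z - w‖ := norm_pos_iff.mpr (sub_ne_zero.mpr hne)
  have hbound := @h₁ (z, w) (by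
    rw [Prod.dist_eq]
    exact max_lt (hz'.trans_le (min_le_left _ _)) (hw'.trans_le (min_le_left _ _)))
  simp only [ContinuousLinearMap.toSpanSingleton_apply, smul_eq_mul] at hbound
  set a := RatFunc.eval (RingHom.id K) z R - RatFunc.eval (RingHom.id K) w R
  have hmain : ‖(z - w) * D‖ = ‖D‖ * ‖z - w‖ := by rw [norm_mul, mul_comm]
  have hprod : 0 < ‖D‖ * ‖z - w‖ := mul_pos hDpos hzw
  have hsmall : ‖a - (z - w) * D‖ < ‖D‖ * ‖z - w‖ := by
    refine hbound.trans_lt ?_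
    linarith
  apply le_antisymm
  · have h := hna (a - (z - w) * D) ((z - w) * D)
    rw [sub_add_cancel, hmain, max_eq_right hsmall.le] at h
    exact h
  · have h := hna a (-(a - (z - w) * D))
    rw [norm_neg, show a + -(a - (z - w) * D) = (z - w) * D by ring, hmain] at h
    exact (le_max_iff.mp h).resolve_right (not_le.mpr hsmall)

/-- Let `(K, v)` be a field with a nonarchimedean absolute value,
`R ∈ K(z)`, and `z₀ ∈ K` not a pole of `R` with `R′(z₀) ≠ 0`.  Then there is `δ > 0`
such that for all `z, w` in the closed ball of radius `δ` around `z₀`, `R` is defined at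
`z` and `w` and `v (R z - R w) = v (R′ z₀) * v (z - w)`. -/
theorem stmt_7 {K : Type*} [Field K]
    (v : AbsoluteValue K ℝ)
    (hna : ∀ x y : K, v (x + y) ≤ max (v x) (v y))
    (R : RatFunc K) (z₀ : K)
    (hpole : R.denom.eval z₀ ≠ 0)
    (hderiv : RatFunc.eval (RingHom.id K) z₀ (ratDeriv R) ≠ 0) :
    ∃ δ : ℝ, 0 < δ ∧ ∀ z w : K, v (z - z₀) ≤ δ → v (w - z₀) ≤ δ →
      R.denom.eval z ≠ 0 ∧ R.denom.eval w ≠ 0 ∧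
      v (RatFunc.eval (RingHom.id K) z R - RatFunc.eval (RingHom.id K) w R)
        = v (RatFunc.eval (RingHom.id K) z₀ (ratDeriv R)) * v (z - w) := by
  by_cases hnt : ∃ x : K, 1 < v x
  · let _ : NontriviallyNormedField K :=
      { v.toNormedField with non_trivial := hnt }
    exact exists_ball_norm_sub_eq (K := K) hna R z₀ hpole hderiv
  · push Not at hnt
    -- Here `v` is trivial: a value in `(0, 1)` would have an inverse of value `> 1`.
    have hball : ∀ z : K, v (z - z₀) ≤ 1 / 2 → z = z₀ := by
      intro z hz
      by_contra hne
      have hpos : 0 < v (z - z₀) := v.pos (sub_ne_zero.mpr hne)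
      have hinv := hnt (z - z₀)⁻¹
      rw [map_inv₀] at hinv
      have := (inv_le_one₀ hpos).mp hinv
      linarith
    refine ⟨1 / 2, by norm_num, fun z w hz hw => ?_⟩
    rw [hball z hz, hball w hw]
    exact ⟨hpole, hpole, by simp⟩
end

section
/- Let p be a prime number and let K be a field of characteristic 0 equipped with a nonarchimedean absolute value |·| whose restriction to ℚ is the p-adic absolute value (so |p| = 1/p and |m| = 1 for every integer m coprime to p). Let P(z) = p^{-1}(z^p − z^{p²}). Then for all z, w ∈ K with p^{-1/(p−1)} < |z| < 1 and |w| ≤ 1, one has |P(z + w) − P(w)| = p · |z|^p. -/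
/-!
Modulo `p z w 𝒪`, where `𝒪` is the unit ball of `v`, one has `(z + w) ^ p ≡ z ^ p + w ^ p`.
Hence `A = (z + w) ^ p - w ^ p` differs from `z ^ p` by an element of absolute value at most
`v z / p`, which is less than `v z ^ p` by the lower bound on `v z`; so `v A = v z ^ p < 1`.
Applying the same congruence to `A` and `w ^ p` shows that `(z + w) ^ p² - w ^ p²` is
`A ^ p` plus an element of absolute value at most `v A / p`, hence is strictly smaller than `A`.
Therefore the difference of the values of `P` has the absolute value of `p⁻¹ A`.
-/

/-- The freshman's dream over the unit ball of a nonarchimedean absolute value: the error term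
is bounded by `v p * v x`. -/
lemma exists_add_pow_prime_error (p : ℕ) (hp : p.Prime) {K : Type*} [Field K]
    (v : AbsoluteValue K ℝ) (hna : ∀ x y : K, v (x + y) ≤ max (v x) (v y))
    (x y : K) (hx : v x ≤ 1) (hy : v y ≤ 1) :
    ∃ e : K, (x + y) ^ p - y ^ p = x ^ p + e ∧ v e ≤ v (p : K) * v x := by
  let O : Subring K :=
    { carrier := {a | v a ≤ 1}
      mul_mem' := fun {a b} ha hb => by
        simpa using mul_le_one₀ ha (v.nonneg b) hb
      one_mem' := by simp
      add_mem' := fun {a b} ha hb => (hna a b).trans (max_le ha hb)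
      zero_mem' := by simp
      neg_mem' := fun {a} ha => by simpa using ha }
  obtain ⟨r, hr⟩ := exists_add_pow_prime_eq hp (⟨x, hx⟩ : O) ⟨y, hy⟩
  have hr' : (x + y) ^ p = x ^ p + y ^ p + p * x * y * (r : K) := by
    simpa using congrArg (fun a : O => (a : K)) hr
  have hr1 : v (r : K) ≤ 1 := r.2
  refine ⟨p * x * y * r, by rw [hr']; ring, ?_⟩
  rw [mul_assoc, v.map_mul, v.map_mul]
  refine mul_le_of_le_one_right (by positivity) ?_
  rw [v.map_mul]
  exact mul_le_one₀ hy (v.nonneg _) hr1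

lemma map_add_eq_of_lt (K : Type*) [Field K]
    (v : AbsoluteValue K ℝ) (hna : ∀ x y : K, v (x + y) ≤ max (v x) (v y))
    (x e : K) (h : v e < v x) : v (x + e) = v x := by
  apply le_antisymm
  · simpa [h.le] using hna x e
  · have h1 := hna (x + e) (-e)
    rw [add_neg_cancel_right, v.map_neg] at h1
    rcases le_max_iff.1 h1 with h2 | h2
    · exact h2
    · linarith


/-- Let `p` be prime and `K` a characteristic-zero field with a
nonarchimedean absolute value restricting to the `p`-adic absolute value on `ℚ`.
Let `P z = p⁻¹ (z ^ p - z ^ p²)`.  If `p ^ (-1/(p-1)) < v z < 1` and `v w ≤ 1`, then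
`v (P (z + w) - P w) = p * (v z) ^ p`. -/
theorem stmt_8 (p : ℕ) (hp : p.Prime) {K : Type*} [Field K] [CharZero K]
    (v : AbsoluteValue K ℝ)
    (hna : ∀ x y : K, v (x + y) ≤ max (v x) (v y))
    (hpadic : ∀ q : ℚ, v (q : K) = (padicNorm p q : ℝ))
    (z w : K)
    (hz₁ : (p : ℝ) ^ (-(1 : ℝ) / ((p : ℝ) - 1)) < v z) (hz₂ : v z < 1)
    (hw : v w ≤ 1) :
    v ((p : K)⁻¹ * ((z + w) ^ p - (z + w) ^ p ^ 2)
        - (p : K)⁻¹ * (w ^ p - w ^ p ^ 2))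
      = (p : ℝ) * v z ^ p := by
  have hp1 : (1 : ℝ) < p := by exact_mod_cast hp.one_lt
  have hp0 : (0 : ℝ) < p := by linarith
  have hvp : v (p : K) = (p : ℝ)⁻¹ := by
    have h := hpadic p
    rw [padicNorm.padicNorm_p hp.one_lt] at h
    simpa using h
  have hz0 : 0 < v z := lt_of_le_of_lt (Real.rpow_nonneg hp0.le _) hz₁
  -- Raising the lower bound on `v z` to the power `p - 1`.
  have hpow : (p : ℝ)⁻¹ < v z ^ (p - 1) := by
    have h := pow_lt_pow_left₀ hz₁ (Real.rpow_nonneg hp0.le _)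
      (Nat.sub_ne_zero_of_lt hp.one_lt)
    rw [← Real.rpow_mul_natCast hp0.le, Nat.cast_sub hp.one_le, Nat.cast_one,
      div_mul_cancel₀ _ (by linarith : (p : ℝ) - 1 ≠ 0), Real.rpow_neg_one] at h
    exact h
  have hsmall : (p : ℝ)⁻¹ * v z < v z ^ p := by
    have h := mul_lt_mul_of_pos_right hpow hz0
    rwa [pow_sub_one_mul hp.ne_zero] at h
  obtain ⟨e, he, hve⟩ := exists_add_pow_prime_error p hp v hna z w hz₂.le hw
  set A := (z + w) ^ p - w ^ p with hA
  have hvA : v A = v z ^ p := by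
    rw [he, map_add_eq_of_lt K v hna _ _ (by rw [v.map_pow]; rw [hvp] at hve; linarith),
      v.map_pow]
  have hA0 : 0 < v A := by rw [hvA]; positivity
  have hA1 : v A < 1 := by rw [hvA]; exact pow_lt_one₀ hz0.le hz₂ hp.ne_zero
  obtain ⟨f, hf, hvf⟩ := exists_add_pow_prime_error p hp v hna A (w ^ p) hA1.le
    (by rw [v.map_pow]; exact pow_le_one₀ (v.nonneg _) hw)
  have hlt : v (-(A ^ p + f)) < v A := by
    rw [v.map_neg]
    refine lt_of_le_of_lt (hna _ _) (max_lt ?_ (lt_of_le_of_lt hvf ?_))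
    · rw [v.map_pow]
      exact pow_lt_self_of_lt_one₀ hA0 hA1 hp.one_lt
    · rw [hvp]
      exact mul_lt_of_lt_one_left hA0 (inv_lt_one_of_one_lt₀ hp1)
  have key : (p : K)⁻¹ * ((z + w) ^ p - (z + w) ^ p ^ 2)
        - (p : K)⁻¹ * (w ^ p - w ^ p ^ 2) = (p : K)⁻¹ * (A + -(A ^ p + f)) := by
    rw [← hf, hA, sub_add_cancel, sq, pow_mul, pow_mul]
    ring
  rw [key, v.map_mul, map_add_eq_of_lt K v hna _ _ hlt, hvA, map_inv₀, hvp, inv_inv]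
end

section
/- Let p be a prime number and let K be a field of characteristic 0 equipped with a nonarchimedean absolute value |·| whose restriction to ℚ is the p-adic absolute value, and assume K is complete and algebraically closed with respect to |·|. Let Q(z) = p^{-1}(z^p − z^{p²}) + p·z^{p²+1}. Then Q has a repelling fixed point of absolute value p²: there exists z₀ ∈ K with Q(z₀) = z₀, |z₀| = p², and |Q′(z₀)| > 1. -/
open Polynomial

/-!
Put `a = p⁻²`. The fixed points of `Q` are the roots of the monic polynomial
`G = X ^ (p² + 1) - a X ^ p² + a X ^ p - p⁻¹ X`. Since `G(a) = a ^ (p + 1) - p⁻¹ a` has absolute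
value at most `(p²) ^ (p + 1) < (p²) ^ deg G`, and `G(a)` is the product of `a - r` over the roots
`r` of `G`, some root `z` satisfies `|a - z| < p² = |a|`; the ultrametric inequality then gives
`|z| = p²`. In `Q′(z) = z ^ (p - 1) + p z ^ (p² - 1) (z + (p² z - 1))` the term
`p z ^ p²` dominates, so `|Q′(z)| = p ^ (2 p² - 1) > 1`.
-/

/-- The polynomial `Q(z) = p⁻¹ (z ^ p - z ^ p²) + p z ^ (p² + 1)`. -/
noncomputable def Qpoly (p : ℕ) (K : Type*) [Field K] : Polynomial K :=
  Polynomial.C ((p : K)⁻¹) * (Polynomial.X ^ p - Polynomial.X ^ p ^ 2)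
    + Polynomial.C (p : K) * Polynomial.X ^ (p ^ 2 + 1)

/-- If `|G(a)| < c ^ deg G` for a monic `G`, then some root of `G` is at distance less than
`c` from `a`. -/
lemma exists_root_close {K : Type*} [Field K] [IsAlgClosed K] (v : AbsoluteValue K ℝ)
    (G : K[X]) (hG : G.Monic) (a : K) (c : ℝ) (hc : 0 ≤ c)
    (h : v (G.eval a) < c ^ G.natDegree) : ∃ z, G.eval z = 0 ∧ v (a - z) < c := by
  by_contra! hcon
  have hs : G.Splits := IsAlgClosed.splits G
  have key : ∀ s : Multiset K, (∀ z ∈ s, c ≤ v (a - z)) →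
      c ^ s.card ≤ v ((s.map (fun z => a - z)).prod) := by
    intro s
    induction s using Multiset.induction_on with
    | empty => simp
    | cons z s ih =>
      intro hz
      have h1 := ih (fun w hw => hz w (Multiset.mem_cons_of_mem hw))
      have h2 := hz z (Multiset.mem_cons_self z s)
      rw [Multiset.card_cons, Multiset.map_cons, Multiset.prod_cons, map_mul, pow_succ']
      exact mul_le_mul h2 h1 (pow_nonneg hc _) (v.nonneg _)
  have h1 := key G.roots (fun z hz => hcon z (isRoot_of_mem_roots hz))
  rw [← hs.natDegree_eq_card_roots, ← hs.eval_eq_prod_roots_of_monic hG] at h1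
  exact absurd h (not_lt.mpr h1)

lemma ultra_add_eq {K : Type*} [Field K] (v : AbsoluteValue K ℝ)
    (hna : ∀ x y : K, v (x + y) ≤ max (v x) (v y)) {x y : K} (h : v x < v y) :
    v (x + y) = v y := by
  apply le_antisymm ((hna x y).trans (max_le h.le le_rfl))
  have h1 := hna (x + y) (-x)
  rw [show x + y + -x = y by ring, v.map_neg] at h1
  rcases le_max_iff.mp h1 with h2 | h2
  · exact h2
  · exact absurd h (not_lt.mpr h2)

/-- Let `p` be prime and `(K, v)` a complete algebraically closed field
of characteristic zero whose absolute value restricts to the `p`-adic one on `ℚ`.  Then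
`Q(z) = p⁻¹ (z ^ p - z ^ p²) + p z ^ (p² + 1)` has a repelling fixed point of absolute
value `p²`: there is `z₀` with `Q z₀ = z₀`, `v z₀ = p²` and `v (Q′ z₀) > 1`. -/
theorem stmt_9 (p : ℕ) (hp : p.Prime) {K : Type*} [Field K] [CharZero K] [IsAlgClosed K]
    (v : AbsoluteValue K ℝ)
    (hna : ∀ x y : K, v (x + y) ≤ max (v x) (v y))
    (hpadic : ∀ q : ℚ, v (q : K) = (padicNorm p q : ℝ))
    (hcomplete : ∀ f : ℕ → K,
      (∀ ε : ℝ, 0 < ε → ∃ N : ℕ, ∀ m ≥ N, ∀ n ≥ N, v (f m - f n) < ε) →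
      ∃ L : K, ∀ ε : ℝ, 0 < ε → ∃ N : ℕ, ∀ n ≥ N, v (f n - L) < ε) :
    ∃ z₀ : K, (Qpoly p K).eval z₀ = z₀ ∧ v z₀ = (p : ℝ) ^ 2 ∧
      1 < v ((Polynomial.derivative (Qpoly p K)).eval z₀) := by
  have hp2 : 2 ≤ p := hp.two_le
  have hpK : (p : K) ≠ 0 := Nat.cast_ne_zero.mpr hp.ne_zero
  have hP1 : (1 : ℝ) < p := by exact_mod_cast hp.one_lt
  have hP0 : (0 : ℝ) < p := by positivity
  have hPsq : (1 : ℝ) < (p : ℝ) ^ 2 := one_lt_pow₀ hP1 two_ne_zero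
  have hvp : v (p : K) = (p : ℝ)⁻¹ := by
    have h := hpadic (p : ℚ)
    have := Fact.mk hp
    rw [padicNorm.padicNorm_p_of_prime] at h
    simpa using h
  obtain ⟨a, ha⟩ : ∃ a : K, a = ((p : K)⁻¹) ^ 2 := ⟨_, rfl⟩
  have hva : v a = (p : ℝ) ^ 2 := by
    rw [ha, map_pow, map_inv₀, hvp, inv_inv]
  have hexp : p < p ^ 2 := by nlinarith
  set R : K[X] := -(C a * X ^ p ^ 2) + C a * X ^ p - C ((p : K)⁻¹) * X with hR
  have hRdeg : R.degree < ((p ^ 2 + 1 : ℕ) : WithBot ℕ) := by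
    have hle : R.degree ≤ ((p ^ 2 : ℕ) : WithBot ℕ) := by
      rw [hR]
      refine (degree_sub_le _ _).trans (max_le ((degree_add_le _ _).trans (max_le ?_ ?_)) ?_)
      · rw [degree_neg]
        exact degree_C_mul_X_pow_le _ _
      · exact (degree_C_mul_X_pow_le _ _).trans (by exact_mod_cast hexp.le)
      · exact (degree_C_mul_X_le _).trans (by exact_mod_cast (by omega : 1 ≤ p ^ 2))
    exact hle.trans_lt (by exact_mod_cast Nat.lt_succ_self _)
  have hGm : (X ^ (p ^ 2 + 1) + R).Monic := monic_X_pow_add hRdeg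
  have hGd : (X ^ (p ^ 2 + 1) + R).natDegree = p ^ 2 + 1 := by
    apply natDegree_eq_of_degree_eq_some
    rw [degree_add_eq_left_of_degree_lt (by rwa [degree_X_pow]), degree_X_pow]
  have hGeval : ∀ z : K, (X ^ (p ^ 2 + 1) + R).eval z
      = z ^ (p ^ 2 + 1) - a * z ^ p ^ 2 + a * z ^ p - (p : K)⁻¹ * z := by
    intro z
    simp only [hR, eval_add, eval_sub, eval_neg, eval_mul, eval_pow, eval_X, eval_C]
    ring
  have hsmall : v ((X ^ (p ^ 2 + 1) + R).eval a)
      < ((p : ℝ) ^ 2) ^ (X ^ (p ^ 2 + 1) + R).natDegree := by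
    rw [hGd, hGeval, show a ^ (p ^ 2 + 1) - a * a ^ p ^ 2 + a * a ^ p - (p : K)⁻¹ * a
      = a ^ (p + 1) + -((p : K)⁻¹ * a) by ring]
    refine (hna _ _).trans_lt (max_lt ?_ ?_)
    · rw [map_pow, hva]
      exact pow_lt_pow_right₀ hPsq (by omega)
    · rw [v.map_neg, map_mul, map_inv₀, hvp, inv_inv, hva, ← pow_succ', ← pow_mul]
      exact pow_lt_pow_right₀ hP1 (by omega)
  obtain ⟨z, hz, hzc⟩ := exists_root_close v _ hGm a _ (by positivity) hsmall
  have hvz : v z = (p : ℝ) ^ 2 := by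
    have h := ultra_add_eq v hna (x := -(a - z)) (y := a) (by rwa [v.map_neg, hva])
    rwa [show -(a - z) + a = z by ring, hva] at h
  refine ⟨z, ?_, hvz, ?_⟩
  · rw [hGeval] at hz
    have hpa : (p : K) * a = (p : K)⁻¹ := by rw [ha]; field_simp
    have hQ : (Qpoly p K).eval z - z
        = p * (z ^ (p ^ 2 + 1) - a * z ^ p ^ 2 + a * z ^ p - (p : K)⁻¹ * z) := by
      simp only [Qpoly, eval_add, eval_sub, eval_mul, eval_pow, eval_X, eval_C]
      linear_combination (z ^ p ^ 2 - z ^ p) * hpa + z * mul_inv_cancel₀ hpK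
    rw [hz, mul_zero] at hQ
    exact sub_eq_zero.mp hQ
  · have hD : (derivative (Qpoly p K)).eval z
        = z ^ (p - 1) + p * z ^ (p ^ 2 - 1) * ((p ^ 2 * z + -1) + z) := by
      have hzz : z ^ p ^ 2 = z ^ (p ^ 2 - 1) * z := by
        rw [← pow_succ, Nat.sub_add_cancel (by omega)]
      simp only [Qpoly, derivative_add, derivative_sub, derivative_mul, derivative_C,
        derivative_X_pow, eval_add, eval_sub, eval_mul, eval_pow, eval_X, eval_C, eval_zero,
        zero_mul, zero_add, Nat.add_sub_cancel, Nat.cast_add, Nat.cast_pow, Nat.cast_one]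
      rw [hzz]
      linear_combination (z ^ (p - 1) - p * z ^ (p ^ 2 - 1)) * mul_inv_cancel₀ hpK
    have h1 : v ((p ^ 2 * z + -1) + z) = (p : ℝ) ^ 2 := by
      rw [ultra_add_eq v hna ?_, hvz]
      refine (hna _ _).trans_lt (max_lt ?_ ?_)
      · rw [map_mul, map_pow, hvp, hvz, ← mul_pow, inv_mul_cancel₀ hP0.ne', one_pow]
        exact hPsq
      · rw [v.map_neg, map_one, hvz]
        exact hPsq
    have h2 : v (p * z ^ (p ^ 2 - 1) * ((p ^ 2 * z + -1) + z))
        = (p : ℝ) ^ (2 * (p ^ 2 - 1) + 1) := by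
      rw [map_mul, map_mul, map_pow, h1, hvp, hvz]
      field_simp
      ring
    rw [hD, ultra_add_eq v hna ?_, h2]
    · exact one_lt_pow₀ hP1 (by omega)
    · rw [h2, map_pow, hvz, ← pow_mul]
      exact pow_lt_pow_right₀ hP1 (by omega)
end

section
/- Let p be a prime number and let K be a field of characteristic 0 equipped with a nonarchimedean absolute value |·| whose restriction to ℚ is the p-adic absolute value, and assume K is complete and algebraically closed with respect to |·|. Let P(z) = p^{-1}(z^p − z^{p²}). Let B = {z ∈ K : |z − c| ≤ r} be a closed ball contained in {z ∈ K : |z| ≤ 1}, with radius r satisfying p^{-1/(p−1)} ≤ r ≤ 1. Then the preimage {z ∈ K : P(z) ∈ B} is the union of exactly p pairwise disjoint closed balls, each of radius (r/p)^{1/p}, and P maps each of these p balls onto B. -/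
/-!
Write `P z = p⁻¹ G (z ^ p)` with `G x = x - x ^ p`, so that `P z ∈ B` means
`|G (z ^ p) - p c| ≤ r / p`.  Two elementary facts carry the proof; both come from the
congruence `(a + h) ^ p ≡ a ^ p + h ^ p`, valid up to an error of size at most `|h| / p` on the
unit ball (`v_add_pow_sub_le`).

* `G` is an isometry on every residue disc of the unit ball (`v_G_sub_eq`).  For `|w| ≤ 1` the
  polynomial `X ^ p - X + p w` has `p` distinct roots, all integral, and factoring it over them
  shows that `|G x - p w| < 1` forces `x` to lie in the residue disc of one of these roots
  (`exists_root_near`).  Hence `{x : |G x - p c| ≤ r / p}` is the union of the `p` balls of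
  radius `r / p` around the roots `x i` of `G x = p c`, which lie in distinct residue discs, and
  `G` maps each of them onto the ball of radius `r / p` around `p c`.
* If `ρ ^ (p - 1) ≥ 1 / p`, then for integral `a, z` one has `|z ^ p - a ^ p| ≤ ρ ^ p` exactly when
  `|z - a| ≤ ρ` (`v_pow_sub_pow_le_iff`): for `|z - a| > ρ` the term `(z - a) ^ p` dominates the
  error.  For `ρ = (r / p) ^ (1 / p)` the condition amounts to `r ≥ p ^ (-1 / (p - 1))`.

Taking `a i` to be a `p`-th root of `x i` gives the centres of the required balls.
-/

open Polynomial

section Ultrametric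

variable {K : Type*} [Field K] {v : AbsoluteValue K ℝ}

lemma v_sub_le (hna : ∀ x y : K, v (x + y) ≤ max (v x) (v y)) (x y : K) :
    v (x - y) ≤ max (v x) (v y) := by
  have h := hna x (-y)
  rwa [← sub_eq_add_neg, v.map_neg] at h

lemma v_add_eq_right (hna : ∀ x y : K, v (x + y) ≤ max (v x) (v y)) {x y : K}
    (h : v x < v y) : v (x + y) = v y := by
  apply le_antisymm ((hna x y).trans (max_le h.le le_rfl))
  have h1 := v_sub_le hna (x + y) x
  rw [add_sub_cancel_left] at h1
  rcases le_max_iff.1 h1 with h2 | h2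
  · exact h2
  · exact absurd h2 (not_le.2 h)

lemma v_natCast_le_one (hna : ∀ x y : K, v (x + y) ≤ max (v x) (v y)) (n : ℕ) :
    v (n : K) ≤ 1 := by
  induction n with
  | zero => simp
  | succ n ih =>
    rw [Nat.cast_succ]
    exact (hna _ _).trans (max_le ih (by simp))

lemma v_sum_le_one (hna : ∀ x y : K, v (x + y) ≤ max (v x) (v y)) {ι : Type*} (s : Finset ι)
    (f : ι → K) (h : ∀ i ∈ s, v (f i) ≤ 1) : v (∑ i ∈ s, f i) ≤ 1 :=
  Finset.sum_induction f (fun x => v x ≤ 1)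
    (fun x y hx hy => (hna x y).trans (max_le hx hy)) (by simp) h

/-- On the unit ball, `p`-th powers are additive up to `p` times the increment, because the
intermediate binomial coefficients are divisible by `p`. -/
lemma v_add_pow_sub_le {p : ℕ} (hp : p.Prime) (hna : ∀ x y : K, v (x + y) ≤ max (v x) (v y))
    (hvp : v (p : K) = 1 / p) {a h : K} (ha : v a ≤ 1) (hh : v h ≤ 1) :
    v ((a + h) ^ p - a ^ p - h ^ p) ≤ v h / p := by
  have hS : v (∑ k ∈ Finset.Ioo 0 p,
      a ^ (k - 1) * h ^ (p - k - 1) * ((p.choose k / p : ℕ) : K)) ≤ 1 := by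
    apply v_sum_le_one hna
    intro k _
    rw [map_mul, map_mul, map_pow, map_pow]
    exact mul_le_one₀ (mul_le_one₀ (pow_le_one₀ (v.nonneg _) ha) (pow_nonneg (v.nonneg _) _)
      (pow_le_one₀ (v.nonneg _) hh)) (v.nonneg _) (v_natCast_le_one hna _)
  rw [add_pow_prime_eq hp, add_sub_right_comm, add_sub_cancel_left, add_sub_cancel_left]
  rw [map_mul, map_mul, map_mul, hvp]
  have hp0 : (0 : ℝ) ≤ 1 / p := by positivity
  calc 1 / (p : ℝ) * v a * v h * _ ≤ 1 / (p : ℝ) * 1 * v h * 1 := by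
        gcongr
    _ = v h / p := by ring

/-- The map `x ↦ x - x ^ p` is an isometry on each residue disc of the unit ball. -/
lemma v_G_sub_eq {p : ℕ} (hp : p.Prime) (hna : ∀ x y : K, v (x + y) ≤ max (v x) (v y))
    (hvp : v (p : K) = 1 / p) {a x : K} (ha : v a ≤ 1) (hx : v (x - a) < 1) :
    v ((x - x ^ p) - (a - a ^ p)) = v (x - a) := by
  obtain ⟨h, rfl⟩ : ∃ h, x = a + h := ⟨x - a, by ring⟩
  rw [add_sub_cancel_left] at hx ⊢
  rcases eq_or_ne h 0 with rfl | h0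
  · simp
  have hpos : 0 < v h := v.pos h0
  have hp1 : (1 : ℝ) < p := by exact_mod_cast hp.one_lt
  have e1 : v ((a + h) ^ p - a ^ p - h ^ p) < v h :=
    (v_add_pow_sub_le hp hna hvp ha hx.le).trans_lt (div_lt_self hpos hp1)
  have e2 : v (h ^ p) < v h := by
    rw [map_pow]
    exact pow_lt_self_of_lt_one₀ hpos hx hp.one_lt
  have e3 : v (-((a + h) ^ p - a ^ p - h ^ p) - h ^ p) < v h :=
    (v_sub_le hna _ _).trans_lt (max_lt (by rwa [v.map_neg]) e2)
  rw [← v_add_eq_right hna e3]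
  congr 1
  ring

/-- Under the `p`-th power map on the unit ball, the preimage of the ball of radius `ρ ^ p` around
`a ^ p` is the single ball of radius `ρ` around `a`, as soon as `ρ ^ (p - 1) ≥ 1 / p`. -/
lemma v_pow_sub_pow_le_iff {p : ℕ} (hp : p.Prime)
    (hna : ∀ x y : K, v (x + y) ≤ max (v x) (v y))
    (hvp : v (p : K) = 1 / p) {ρ : ℝ} (hρ0 : 0 ≤ ρ) (hρ : 1 / (p : ℝ) ≤ ρ ^ (p - 1))
    {a z : K} (ha : v a ≤ 1) (hz : v z ≤ 1) :
    v (z ^ p - a ^ p) ≤ ρ ^ p ↔ v (z - a) ≤ ρ := by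
  have hza : v (z - a) ≤ 1 := (v_sub_le hna z a).trans (max_le hz ha)
  obtain ⟨h, rfl⟩ : ∃ h, z = a + h := ⟨z - a, by ring⟩
  rw [add_sub_cancel_left] at hza ⊢
  have he := v_add_pow_sub_le hp hna hvp ha hza
  have hsplit : (a + h) ^ p - a ^ p = ((a + h) ^ p - a ^ p - h ^ p) + h ^ p := by ring
  have hps : ∀ t : ℝ, t ^ p = t * t ^ (p - 1) := fun t => by
    rw [← pow_succ', Nat.sub_add_cancel hp.one_le]
  constructor
  · contrapose!
    intro hlt
    have hpos : 0 < v h := hρ0.trans_lt hlt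
    have hdom : v h / p < v (h ^ p) := by
      rw [map_pow, hps, div_eq_mul_one_div]
      apply mul_lt_mul_of_pos_left _ hpos
      exact hρ.trans_lt (pow_lt_pow_left₀ hlt hρ0 (by have := hp.two_le; omega))
    rw [hsplit, v_add_eq_right hna (he.trans_lt hdom), map_pow]
    exact pow_lt_pow_left₀ hlt hρ0 hp.ne_zero
  · intro hle
    rw [hsplit]
    refine (hna _ _).trans (max_le (he.trans ?_) ?_)
    · rw [hps, div_eq_mul_one_div]
      exact mul_le_mul hle hρ (by positivity) hρ0
    · rw [map_pow]
      exact pow_le_pow_left₀ (v.nonneg _) hle p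

end Ultrametric

section Roots

variable {K : Type*} [Field K] {v : AbsoluteValue K ℝ}

/-- The monic polynomial whose roots are the solutions of `x - x ^ p = p w`. -/
noncomputable def rootPoly (p : ℕ) (w : K) : K[X] := X ^ p + (C ((p : K) * w) - X)

lemma rootPoly_tail_degree {p : ℕ} (hp : p.Prime) (w : K) :
    (C ((p : K) * w) - X).degree < (p : WithBot ℕ) := by
  refine (degree_sub_le _ _).trans_lt (max_lt ?_ ?_)
  · exact degree_C_le.trans_lt (by exact_mod_cast hp.pos)
  · rw [degree_X]
    exact_mod_cast hp.one_lt

lemma rootPoly_monic {p : ℕ} (hp : p.Prime) (w : K) : (rootPoly p w).Monic :=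
  monic_X_pow_add (rootPoly_tail_degree hp w)

lemma rootPoly_natDegree {p : ℕ} (hp : p.Prime) (w : K) : (rootPoly p w).natDegree = p := by
  apply natDegree_eq_of_degree_eq_some
  rw [rootPoly, degree_add_eq_left_of_degree_lt, degree_X_pow]
  rw [degree_X_pow]
  exact rootPoly_tail_degree hp w

lemma rootPoly_eval (p : ℕ) (w x : K) :
    (rootPoly p w).eval x = -((x - x ^ p) - p * w) := by
  simp [rootPoly]
  ring

lemma mem_rootPoly_roots {p : ℕ} (hp : p.Prime) (w x : K) :
    x ∈ (rootPoly p w).roots ↔ x - x ^ p = p * w := by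
  rw [mem_roots (rootPoly_monic hp w).ne_zero, IsRoot.def, rootPoly_eval, neg_eq_zero, sub_eq_zero]

lemma v_root_le_one {p : ℕ} (hp : p.Prime) (hna : ∀ x y : K, v (x + y) ≤ max (v x) (v y))
    {w x : K} (hw : v w ≤ 1) (hx : x - x ^ p = p * w) : v x ≤ 1 := by
  by_contra! hlt
  have hpw : v ((p : K) * w) ≤ 1 := by
    rw [map_mul]
    exact mul_le_one₀ (v_natCast_le_one hna p) (v.nonneg _) hw
  have h1 : v (x ^ p) ≤ v x := by
    have h2 : x ^ p = x - p * w := by rw [← hx]; ring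
    rw [h2]
    exact (v_sub_le hna _ _).trans (max_le le_rfl (hpw.trans hlt.le))
  rw [map_pow] at h1
  exact absurd h1 (not_le.2 (lt_self_pow₀ hlt hp.one_lt))

/-- The roots are simple: the derivative `p x ^ (p - 1) - 1` is a unit at integral `x`. -/
lemma rootPoly_roots_nodup {p : ℕ} (hp : p.Prime)
    (hna : ∀ x y : K, v (x + y) ≤ max (v x) (v y))
    (hvp : v (p : K) = 1 / p) {w : K} (hw : v w ≤ 1) : (rootPoly p w).roots.Nodup := by
  classical
  rw [Multiset.nodup_iff_count_le_one]
  intro x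
  rw [count_roots]
  by_contra! hlt
  have hne := (rootPoly_monic hp w).ne_zero
  obtain ⟨h1, h2⟩ := (one_lt_rootMultiplicity_iff_isRoot hne).1 hlt
  have hx : v x ≤ 1 := v_root_le_one hp hna hw
    ((mem_rootPoly_roots hp w x).1 ((mem_roots hne).2 h1))
  have h3 : (p : K) * x ^ (p - 1) = 1 := by
    have : (p : K) * x ^ (p - 1) - 1 = 0 := by
      simpa [rootPoly, IsRoot.def, derivative_X_pow, sub_eq_add_neg] using h2
    exact sub_eq_zero.1 this
  have h4 := congrArg v h3
  rw [map_mul, map_pow, hvp, map_one] at h4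
  have hp1 : (1 : ℝ) < p := by exact_mod_cast hp.one_lt
  have h5 : 1 / (p : ℝ) * v x ^ (p - 1) ≤ 1 / p * 1 := by
    gcongr
    exact pow_le_one₀ (v.nonneg _) hx
  have h6 : 1 / (p : ℝ) < 1 := (div_lt_one (by linarith)).2 hp1
  linarith

lemma exists_roots [IsAlgClosed K] {p : ℕ} (hp : p.Prime)
    (hna : ∀ x y : K, v (x + y) ≤ max (v x) (v y))
    (hvp : v (p : K) = 1 / p) {w : K} (hw : v w ≤ 1) :
    ∃ x : Fin p → K, Function.Injective x ∧ ∀ y, y - y ^ p = p * w ↔ ∃ i, y = x i := by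
  classical
  have hcard : (rootPoly p w).roots.toFinset.card = p := by
    rw [Multiset.toFinset_card_of_nodup (rootPoly_roots_nodup hp hna hvp hw),
      ← (IsAlgClosed.splits _).natDegree_eq_card_roots, rootPoly_natDegree hp]
  let e := (rootPoly p w).roots.toFinset.equivFinOfCardEq hcard
  refine ⟨fun i => (e.symm i : K), fun i j hij => e.symm.injective (Subtype.ext hij), fun y => ?_⟩
  rw [← mem_rootPoly_roots hp, ← Multiset.mem_toFinset]
  constructor
  · intro hy
    exact ⟨e ⟨y, hy⟩, by simp⟩
  · rintro ⟨i, rfl⟩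
    exact (e.symm i).2

/-- If `|x - x ^ p - p w| < 1`, then one factor of `∏ (x - y)` over the roots `y` of
`y - y ^ p = p w` has absolute value less than `1`. -/
lemma exists_root_near [IsAlgClosed K] {p : ℕ} (hp : p.Prime) {w x : K}
    (hx : v ((x - x ^ p) - p * w) < 1) : ∃ y, y - y ^ p = p * w ∧ v (x - y) < 1 := by
  by_contra! hcon
  have h := (IsAlgClosed.splits (rootPoly p w)).eval_eq_prod_roots_of_monic
    (rootPoly_monic hp w) x
  rw [rootPoly_eval] at h
  have h2 := congrArg v h
  rw [v.map_neg, map_multiset_prod, Multiset.map_map] at h2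
  rw [h2] at hx
  refine absurd hx (not_lt.2 ?_)
  have hall : ∀ s : Multiset K, (∀ y ∈ s, 1 ≤ v (x - y)) →
      1 ≤ (s.map (v ∘ fun y => x - y)).prod := by
    intro s
    induction s using Multiset.induction_on with
    | empty => simp
    | cons a s ih =>
      intro hs
      rw [Multiset.map_cons, Multiset.prod_cons]
      exact one_le_mul_of_one_le_of_one_le (hs a (Multiset.mem_cons_self a s))
        (ih fun y hy => hs y (Multiset.mem_cons_of_mem hy))
  exact hall _ fun y hy => hcon y ((mem_rootPoly_roots hp w y).1 hy)

end Roots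

lemma radius_pow_ge {p : ℕ} (hp : p.Prime) {r ρ : ℝ} (hρ0 : 0 ≤ ρ)
    (hρ : ρ ^ p = r / p) (hr₁ : (p : ℝ) ^ (-(1 : ℝ) / ((p : ℝ) - 1)) ≤ r) :
    1 / (p : ℝ) ≤ ρ ^ (p - 1) := by
  have hp0 : (0 : ℝ) < p := by exact_mod_cast hp.pos
  have hp1 : (1 : ℝ) < p := by exact_mod_cast hp.one_lt
  have hr : 1 / (p : ℝ) ≤ r ^ (p - 1) := by
    have h := pow_le_pow_left₀ (by positivity) hr₁ (p - 1)
    rw [← Real.rpow_natCast, ← Real.rpow_mul hp0.le, Nat.cast_sub hp.one_le, Nat.cast_one,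
      div_mul_cancel₀ _ (by linarith), Real.rpow_neg_one] at h
    rwa [one_div]
  -- Compare `p`-th powers: `(ρ ^ (p - 1)) ^ p = (r / p) ^ (p - 1)`.
  rw [← pow_le_pow_iff_left₀ (by positivity) (by positivity) hp.ne_zero, ← pow_mul,
    mul_comm, pow_mul, hρ, div_pow r]
  have hps : (1 / (p : ℝ)) ^ p = 1 / p / (p : ℝ) ^ (p - 1) := by
    obtain ⟨n, rfl⟩ : ∃ n, p = n + 1 := ⟨p - 1, (Nat.sub_add_cancel hp.one_le).symm⟩
    rw [Nat.add_sub_cancel, div_pow, one_pow, div_div, ← pow_succ']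
  rw [hps]
  gcongr

/-- Let `p` be prime, `(K, v)` complete algebraically closed of
characteristic zero with `v` restricting to the `p`-adic absolute value on `ℚ`, and let
`P z = p⁻¹ (z ^ p - z ^ p²)`.  Let `B = {z : v (z - c) ≤ r}` be a closed ball contained
in the closed unit ball, with `p ^ (-1/(p-1)) ≤ r ≤ 1`.  Then `P⁻¹(B)` is the union of
exactly `p` pairwise disjoint closed balls, each of radius `(r / p) ^ (1/p)`, and `P`
maps each of these balls onto `B`. -/
theorem stmt_10 (p : ℕ) (hp : p.Prime) {K : Type*} [Field K] [CharZero K] [IsAlgClosed K]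
    (v : AbsoluteValue K ℝ)
    (hna : ∀ x y : K, v (x + y) ≤ max (v x) (v y))
    (hpadic : ∀ q : ℚ, v (q : K) = (padicNorm p q : ℝ))
    (hcomplete : ∀ f : ℕ → K,
      (∀ ε : ℝ, 0 < ε → ∃ N : ℕ, ∀ m ≥ N, ∀ n ≥ N, v (f m - f n) < ε) →
      ∃ L : K, ∀ ε : ℝ, 0 < ε → ∃ N : ℕ, ∀ n ≥ N, v (f n - L) < ε)
    (c : K) (r : ℝ)
    (hr₁ : (p : ℝ) ^ (-(1 : ℝ) / ((p : ℝ) - 1)) ≤ r) (hr₂ : r ≤ 1)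
    (hB : ∀ z : K, v (z - c) ≤ r → v z ≤ 1) :
    ∃ a : Fin p → K,
      (∀ i j : Fin p, i ≠ j →
        Disjoint {z : K | v (z - a i) ≤ (r / (p : ℝ)) ^ ((1 : ℝ) / (p : ℝ))}
          {z : K | v (z - a j) ≤ (r / (p : ℝ)) ^ ((1 : ℝ) / (p : ℝ))}) ∧
      ({z : K | v ((p : K)⁻¹ * (z ^ p - z ^ p ^ 2) - c) ≤ r}
        = ⋃ i : Fin p, {z : K | v (z - a i) ≤ (r / (p : ℝ)) ^ ((1 : ℝ) / (p : ℝ))}) ∧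
      (∀ i : Fin p,
        (fun z : K => (p : K)⁻¹ * (z ^ p - z ^ p ^ 2))
            '' {z : K | v (z - a i) ≤ (r / (p : ℝ)) ^ ((1 : ℝ) / (p : ℝ))}
          = {w : K | v (w - c) ≤ r}) := by
  have hp0 : (0 : ℝ) < p := by exact_mod_cast hp.pos
  have hp1 : (1 : ℝ) < p := by exact_mod_cast hp.one_lt
  have hpK : (p : K) ≠ 0 := by exact_mod_cast hp.ne_zero
  have hvp : v (p : K) = 1 / p := by
    have h := hpadic p
    rw [padicNorm.padicNorm_p hp.one_lt] at h
    simpa using h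
  have hr0 : 0 < r := (Real.rpow_pos_of_pos hp0 _).trans_le hr₁
  have hc : v c ≤ 1 := hB c (by simpa using hr0.le)
  have hrp1 : r / p < 1 := (div_lt_one hp0).2 (hr₂.trans_lt hp1)
  set ρ : ℝ := (r / (p : ℝ)) ^ ((1 : ℝ) / (p : ℝ)) with hρdef
  have hρ0 : 0 ≤ ρ := by positivity
  have hρp : ρ ^ p = r / p := by
    rw [hρdef, one_div]
    exact Real.rpow_inv_natCast_pow (by positivity) hp.ne_zero
  have hρ1 : ρ ≤ 1 := Real.rpow_le_one (by positivity) hrp1.le (by positivity)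
  have hρge := radius_pow_ge hp hρ0 hρp hr₁
  obtain ⟨x, hxinj, hxroots⟩ := exists_roots hp hna hvp hc
  have hxr : ∀ i, x i - x i ^ p = p * c := fun i => (hxroots _).2 ⟨i, rfl⟩
  have hx1 : ∀ i, v (x i) ≤ 1 := fun i => v_root_le_one hp hna hc (hxr i)
  choose a ha using fun i => IsAlgClosed.exists_pow_nat_eq (x i) hp.pos
  have pow_le : ∀ z : K, v (z ^ p) ≤ 1 → v z ≤ 1 := fun z hz => by
    rw [map_pow] at hz
    exact (pow_le_one_iff_of_nonneg (v.nonneg _) hp.ne_zero).1 hz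
  have ha1 : ∀ i, v (a i) ≤ 1 := fun i => pow_le _ (by rw [ha]; exact hx1 i)
  have le_one_of_near : ∀ y z : K, v z ≤ 1 → v (y - z) ≤ 1 → v y ≤ 1 := fun y z hz hyz => by
    have h := hna (y - z) z
    rw [sub_add_cancel] at h
    exact h.trans (max_le hyz hz)
  have hball : ∀ i z, v (z - a i) ≤ ρ ↔ v (z ^ p - x i) ≤ r / p := by
    intro i z
    rw [← ha i, ← hρp]
    constructor
    · intro hz
      exact (v_pow_sub_pow_le_iff hp hna hvp hρ0 hρge (ha1 i)
        (le_one_of_near _ _ (ha1 i) (hz.trans hρ1))).2 hz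
    · intro hz
      refine (v_pow_sub_pow_le_iff hp hna hvp hρ0 hρge (ha1 i) (pow_le _ ?_)).1 hz
      refine le_one_of_near _ (a i ^ p) (by rw [ha]; exact hx1 i) (hz.trans ?_)
      rw [hρp]
      exact hrp1.le
  have hP : ∀ z w : K, v ((p : K)⁻¹ * (z ^ p - z ^ p ^ 2) - w)
      = p * v ((z ^ p - (z ^ p) ^ p) - p * w) := by
    intro z w
    have h : (p : K)⁻¹ * (z ^ p - z ^ p ^ 2) - w
        = (p : K)⁻¹ * ((z ^ p - (z ^ p) ^ p) - p * w) := by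
      rw [← pow_mul, ← sq]
      field_simp
    rw [h, map_mul, map_inv₀, hvp, one_div, inv_inv]
  have hPle : ∀ z : K, v ((p : K)⁻¹ * (z ^ p - z ^ p ^ 2) - c) ≤ r ↔
      v ((z ^ p - (z ^ p) ^ p) - p * c) ≤ r / p := by
    intro z
    rw [hP, le_div_iff₀ hp0, mul_comm]
  have hiso : ∀ i y, v (y - x i) < 1 → v ((y - y ^ p) - p * c) = v (y - x i) := by
    intro i y hy
    rw [← hxr i]
    exact v_G_sub_eq hp hna hvp (hx1 i) hy
  refine ⟨a, ?_, ?_, ?_⟩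
  · intro i j hij
    rw [Set.disjoint_left]
    intro z hzi hzj
    have h1 : v (z ^ p - x i) < 1 := ((hball i z).1 hzi).trans_lt hrp1
    have h2 : v (z ^ p - x j) < 1 := ((hball j z).1 hzj).trans_lt hrp1
    have h3 : v (x j - x i) < 1 := by
      have h := v_sub_le hna (z ^ p - x i) (z ^ p - x j)
      rw [sub_sub_sub_cancel_left] at h
      exact h.trans_lt (max_lt h1 h2)
    have h4 := hiso i (x j) h3
    rw [hxr j, sub_self, map_zero] at h4
    exact hij (hxinj (sub_eq_zero.1 (v.eq_zero.1 h4.symm))).symm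
  · ext z
    simp only [Set.mem_ofPred_eq, Set.mem_iUnion, hPle, hball]
    constructor
    · intro hz
      obtain ⟨y, hy, hzy⟩ := exists_root_near hp (hz.trans_lt hrp1)
      obtain ⟨i, rfl⟩ := (hxroots y).1 hy
      exact ⟨i, by rwa [← hiso i _ hzy]⟩
    · rintro ⟨i, hi⟩
      rwa [hiso i _ (hi.trans_lt hrp1)]
  · intro i
    ext w
    simp only [Set.mem_image, Set.mem_ofPred_eq]
    constructor
    · rintro ⟨z, hz, rfl⟩
      rw [hball] at hz
      rwa [hPle, hiso i _ (hz.trans_lt hrp1)]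
    · intro hw
      have hdist : v ((p : K) * w - p * c) ≤ r / p := by
        rw [← mul_sub, map_mul, hvp, one_div, inv_mul_eq_div]
        gcongr
      have hnear : v ((x i - x i ^ p) - p * w) < 1 := by
        rw [hxr, v.map_sub]
        exact hdist.trans_lt hrp1
      obtain ⟨y, hy, hxy⟩ := exists_root_near hp hnear
      obtain ⟨z, rfl⟩ := IsAlgClosed.exists_pow_nat_eq y hp.pos
      rw [v.map_sub] at hxy
      refine ⟨z, ?_, ?_⟩
      · rw [hball, ← hiso i _ hxy, hy]
        exact hdist
      · rw [← sub_eq_zero, ← v.eq_zero, hP, hy, sub_self, map_zero, mul_zero]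
end
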